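/- arXiv:1705.10200 — 2 statements merged into one kernel-verified Lean document; each statement's English description precedes it below -/
import Mathlib

section
/- Let n, l ≥ 1, 1 ≤ p,q ≤ n, and r ≥ 1. Then in U(Q(n))^{⊗l}: U^{⊗l}∘Δ_l^{op}(T_{q,p}^{(r)}) equals (−1)^r times the even component, and U^{⊗l}∘Δ_l^{op}(T_{−q,p}^{(r)}) equals (−1)^r times the odd component, of the sum over all 1 ≤ p_1,…,p_{r−1} ≤ n and all l ≥ i_1 ≥ i_2 ≥ … ≥ i_r ≥ 1 of the ordered products Π_{a=1}^{r} (x^{i_a}_{p_{a−1}, p_a} + (−1)^{r−a} ξ^{i_a}_{p_{a−1}, p_a}), where p_0 := p and p_r := q. -/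
noncomputable section
open scoped Classical

/-! # The universal enveloping superalgebra `U(Q(n))` of the queer Lie superalgebra

`U(Q(n))` is presented by even generators `e i j` and odd generators `f i j`
(`1 ≤ i,j ≤ n`) subject to the relations
`[e i j, e k l] = δ_{jk} e i l - δ_{li} e k j`,
`[e i j, f k l] = δ_{jk} f i l - δ_{li} f k j`,
`f i j * f k l + f k l * f i j = δ_{jk} e i l + δ_{li} e k j`. -/

/-- Generators of `U(Q(n))`: `E i j` (even) and `F i j` (odd). -/
inductive QGen (n : ℕ) : Type
  | E : Fin n → Fin n → QGen n
  | F : Fin n → Fin n → QGen n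

/-- Kronecker delta. -/
def kd {n : ℕ} (i j : Fin n) : ℂ := if i = j then 1 else 0

/-- The defining relations of `U(Q(n))`. -/
inductive QRel (n : ℕ) : FreeAlgebra ℂ (QGen n) → FreeAlgebra ℂ (QGen n) → Prop
  | ee (i j k l : Fin n) : QRel n
      (FreeAlgebra.ι ℂ (QGen.E i j) * FreeAlgebra.ι ℂ (QGen.E k l) -
        FreeAlgebra.ι ℂ (QGen.E k l) * FreeAlgebra.ι ℂ (QGen.E i j))
      (kd j k • FreeAlgebra.ι ℂ (QGen.E i l) - kd l i • FreeAlgebra.ι ℂ (QGen.E k j))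
  | ef (i j k l : Fin n) : QRel n
      (FreeAlgebra.ι ℂ (QGen.E i j) * FreeAlgebra.ι ℂ (QGen.F k l) -
        FreeAlgebra.ι ℂ (QGen.F k l) * FreeAlgebra.ι ℂ (QGen.E i j))
      (kd j k • FreeAlgebra.ι ℂ (QGen.F i l) - kd l i • FreeAlgebra.ι ℂ (QGen.F k j))
  | ff (i j k l : Fin n) : QRel n
      (FreeAlgebra.ι ℂ (QGen.F i j) * FreeAlgebra.ι ℂ (QGen.F k l) +
        FreeAlgebra.ι ℂ (QGen.F k l) * FreeAlgebra.ι ℂ (QGen.F i j))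
      (kd j k • FreeAlgebra.ι ℂ (QGen.E i l) + kd l i • FreeAlgebra.ι ℂ (QGen.E k j))

/-- The universal enveloping superalgebra `U(Q(n))`. -/
abbrev UQ (n : ℕ) := RingQuot (QRel n)

/-- The generator `e i j` of `U(Q(n))`. -/
def Ue {n : ℕ} (i j : Fin n) : UQ n :=
  RingQuot.mkAlgHom ℂ (QRel n) (FreeAlgebra.ι ℂ (QGen.E i j))

/-- The generator `f i j` of `U(Q(n))`. -/
def Uf {n : ℕ} (i j : Fin n) : UQ n :=
  RingQuot.mkAlgHom ℂ (QRel n) (FreeAlgebra.ι ℂ (QGen.F i j))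

/-- Sergeev's elements `e_{ij}^{(m)}` and `f_{ij}^{(m)}` of `U(Q(n))`, defined recursively by
`e^{(0)} = δ`, `f^{(0)} = 0`,
`e_{ij}^{(m)} = Σ_k e_{ik} e_{kj}^{(m-1)} + (-1)^{m+1} Σ_k f_{ik} f_{kj}^{(m-1)}`,
`f_{ij}^{(m)} = Σ_k e_{ik} f_{kj}^{(m-1)} + (-1)^{m+1} Σ_k f_{ik} e_{kj}^{(m-1)}`. -/
def efU (n : ℕ) : ℕ → (Fin n → Fin n → UQ n) × (Fin n → Fin n → UQ n)
  | 0 => (fun i j => algebraMap ℂ (UQ n) (kd i j), fun _ _ => 0)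
  | m + 1 =>
      (fun i j => (∑ k, Ue i k * (efU n m).1 k j) +
        (-1 : ℂ) ^ m • ∑ k, Uf i k * (efU n m).2 k j,
       fun i j => (∑ k, Ue i k * (efU n m).2 k j) +
        (-1 : ℂ) ^ m • ∑ k, Uf i k * (efU n m).1 k j)

/-- `e_{ij}^{(m)}`. -/
def eU {n : ℕ} (m : ℕ) (i j : Fin n) : UQ n := (efU n m).1 i j
/-- `f_{ij}^{(m)}`. -/
def fU {n : ℕ} (m : ℕ) (i j : Fin n) : UQ n := (efU n m).2 i j

/-- For `l ∣ n`, the index `l(p-1)+i` of `{1,…,n}` (0-based: block `p`, position `i`). -/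
def bidx {n l : ℕ} (h : l ∣ n) (p : Fin (n / l)) (i : Fin l) : Fin n :=
  ⟨l * p.val + i.val, by
    have h1 : i.val < l := i.isLt
    have h2 : p.val + 1 ≤ n / l := p.isLt
    have h3 : l * (p.val + 1) ≤ l * (n / l) := Nat.mul_le_mul_left l h2
    have h4 : n / l * l ≤ n := Nat.div_mul_le_self n l
    have h5 : l * (p.val + 1) = l * p.val + l := Nat.mul_succ l p.val
    have h6 : l * (n / l) = n / l * l := Nat.mul_comm l (n / l)
    omega⟩
set_option linter.unusedVariables false

/-! # The character `χ`, the left ideal `I_χ` and the finite W-algebra data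

Here `l ∣ n` and `χ` corresponds to the even nilpotent element of `Q(n)` all of whose
Jordan blocks have size `l`.  The subalgebra `m = ⊕_{j<0} g_j` is spanned by the
elements `e_{l(p-1)+i+k, l(q-1)+i}` and `f_{l(p-1)+i+k, l(q-1)+i}` (`k ≥ 1`), and
`χ(e_{l(p-1)+i+1, l(q-1)+i}) = δ_{pq}` and `χ = 0` on the other basis elements. -/

/-- The set of elements `a - χ(a)` for `a` ranging over the standard basis of `m`;
(rows/columns written 0-based: `a` is the position of the row inside its block `p`,
`b` the position of the column inside its block `q`, with `b < a`). -/
def mSet (n l : ℕ) (h : l ∣ n) : Set (UQ n) :=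
  { x : UQ n | ∃ (p q : Fin (n / l)) (a b : Fin l), b.val < a.val ∧
      (x = Ue (bidx h p a) (bidx h q b) -
            algebraMap ℂ (UQ n) (if a.val = b.val + 1 ∧ p = q then 1 else 0) ∨
       x = Uf (bidx h p a) (bidx h q b)) }

/-- The left ideal `I_χ` of `U(Q(n))` generated by the `a - χ(a)`, `a ∈ m`. -/
def Ichi (n l : ℕ) (h : l ∣ n) : Submodule (UQ n) (UQ n) :=
  Submodule.span (UQ n) (mSet n l h)

/-- The quotient `U(Q(n))/I_χ` (as a `ℂ`-vector space). -/
abbrev Wq (n l : ℕ) (h : l ∣ n) := UQ n ⧸ (Ichi n l h).restrictScalars ℂ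

/-- The quotient map `π : U(Q(n)) → U(Q(n))/I_χ`. -/
def piq (n l : ℕ) (h : l ∣ n) : UQ n →ₗ[ℂ] Wq n l h :=
  ((Ichi n l h).restrictScalars ℂ).mkQ

/-- `y` super-commutes with `m` into `I_χ`:  `[a, y] ∈ I_χ` for every `a` in the standard
basis of `m`.  Here the super-commutator of the odd element `f` with (the possibly
non-homogeneous) `y` is `f * y - σ(y) * f`, where `σ` is the parity involution of
`U(Q(n))` (the algebra automorphism fixing the `e`'s and negating the `f`'s). -/
def Wcond {n l : ℕ} (h : l ∣ n) (σ : UQ n →ₐ[ℂ] UQ n) (y : UQ n) : Prop :=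
  ∀ (p q : Fin (n / l)) (a b : Fin l), b.val < a.val →
    (Ue (bidx h p a) (bidx h q b) * y - y * Ue (bidx h p a) (bidx h q b) ∈ Ichi n l h) ∧
    (Uf (bidx h p a) (bidx h q b) * y - σ y * Uf (bidx h p a) (bidx h q b) ∈ Ichi n l h)

/-- The finite W-algebra `W_χ = {π(y) | [a, y] ∈ I_χ for all a ∈ m}`, as a subset of
`U(Q(n))/I_χ`.  (Its product is `π(y₁)·π(y₂) = π(y₁y₂)`.) -/
def WchiSet (n l : ℕ) (h : l ∣ n) (σ : UQ n →ₐ[ℂ] UQ n) : Set (Wq n l h) :=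
  { w : Wq n l h | ∃ y : UQ n, Wcond h σ y ∧ piq n l h y = w }

/-- The standard basis elements of the parabolic subalgebra `p = ⊕_{j≥0} g_j`. -/
def pSet (n l : ℕ) (h : l ∣ n) : Set (UQ n) :=
  { x : UQ n | ∃ (p q : Fin (n / l)) (a b : Fin l), a.val ≤ b.val ∧
      (x = Ue (bidx h p a) (bidx h q b) ∨ x = Uf (bidx h p a) (bidx h q b)) }

/-- The standard basis elements of the nilradical `n = ⊕_{j>0} g_j` of `p`. -/
def nSet (n l : ℕ) (h : l ∣ n) : Set (UQ n) :=
  { x : UQ n | ∃ (p q : Fin (n / l)) (a b : Fin l), a.val < b.val ∧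
      (x = Ue (bidx h p a) (bidx h q b) ∨ x = Uf (bidx h p a) (bidx h q b)) }

/-- The kernel of the Harish-Chandra projection `ϑ : U(p) → U(g₀)`, realized inside
`U(Q(n))`: the `ℂ`-span of `U(p)·n`.  (By the PBW theorem, `U(g) = U(p) ⊕ I_χ` and
`U(p) = U(g₀) ⊕ U(p)n`, so for `y ∈ U(g)`, `ϑ(pr(y)) = t` iff
`y - t ∈ I_χ + U(p)n`.) -/
def Lspan (n l : ℕ) (h : l ∣ n) : Submodule ℂ (UQ n) :=
  Submodule.span ℂ
    { x : UQ n | ∃ u ∈ Algebra.adjoin ℂ (pSet n l h), ∃ g ∈ nSet n l h, x = u * g }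

/-- A descriptor of a generator of `U(p)`:  `(b, p, q, a, c)` is
`e_{l(p-1)+(a+1), l(q-1)+(c+1)}` if `b = false` and `f_{…}` if `b = true`
(required: `a ≤ c`). -/
def pgElem {n l : ℕ} (h : l ∣ n) :
    Bool × Fin (n / l) × Fin (n / l) × Fin l × Fin l → UQ n
  | (b, p, q, a, c) => (if b then Uf else Ue) (bidx h p a) (bidx h q c)

/-- Kazhdan degree `2k+2` of a `p`-generator of block offset `k = c - a`. -/
def pgDeg {l m : ℕ} (d : Bool × Fin m × Fin m × Fin l × Fin l) : ℕ :=
  2 * (d.2.2.2.2.val - d.2.2.2.1.val) + 2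

/-- Weight `2k` of a `p`-generator of block offset `k = c - a`. -/
def pgWt {l m : ℕ} (d : Bool × Fin m × Fin m × Fin l × Fin l) : ℕ :=
  2 * (d.2.2.2.2.val - d.2.2.2.1.val)

/-- Monomials in the generators of `U(p)` which are "lower" than bidegree
(Kazhdan degree `D`, weight `W`): either of Kazhdan degree `< D`, or of Kazhdan
degree `≤ D` and weight `< W`. -/
def LowSet (n l : ℕ) (h : l ∣ n) (D W : ℕ) : Set (UQ n) :=
  { x : UQ n | ∃ L : List (Bool × Fin (n / l) × Fin (n / l) × Fin l × Fin l),
      (∀ d ∈ L, d.2.2.2.1.val ≤ d.2.2.2.2.val) ∧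
      x = (L.map (pgElem h)).prod ∧
      ((L.map pgDeg).sum < D ∨ ((L.map pgDeg).sum ≤ D ∧ (L.map pgWt).sum < W)) }

/-- The span of the "lower" monomials. -/
def LowSpan (n l : ℕ) (h : l ∣ n) (D W : ℕ) : Submodule ℂ (UQ n) :=
  Submodule.span ℂ (LowSet n l h D W)

/-! # The super tensor power `U(Q(m))^{⊗l}`

Modeled as the superalgebra with generators `x^i_{pq} = 1^{⊗(l-i)} ⊗ e_{pq} ⊗ 1^{⊗(i-1)}`
(even) and `ξ^i_{pq} = 1^{⊗(l-i)} ⊗ f_{pq} ⊗ 1^{⊗(i-1)}` (odd), subject to the `U(Q(m))`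
relations in each tensor slot and to (super-)commutation between different slots. -/

/-- Generators of `U(Q(m))^{⊗l}`: `X i p q` is `x^i_{pq}` and `Xi i p q` is `ξ^i_{pq}`
(`i : Fin l` is the 0-based tensor slot, counted from the right). -/
inductive TGen (m l : ℕ) : Type
  | X : Fin l → Fin m → Fin m → TGen m l
  | Xi : Fin l → Fin m → Fin m → TGen m l

/-- Kronecker delta on slots. -/
def kdl {l : ℕ} (i j : Fin l) : ℂ := if i = j then 1 else 0

/-- The defining relations of `U(Q(m))^{⊗l}`. -/
inductive TRel (m l : ℕ) : FreeAlgebra ℂ (TGen m l) → FreeAlgebra ℂ (TGen m l) → Prop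
  | xx (i i' : Fin l) (p q r s : Fin m) : TRel m l
      (FreeAlgebra.ι ℂ (TGen.X i p q) * FreeAlgebra.ι ℂ (TGen.X i' r s) -
        FreeAlgebra.ι ℂ (TGen.X i' r s) * FreeAlgebra.ι ℂ (TGen.X i p q))
      ((kdl i i' * kd q r) • FreeAlgebra.ι ℂ (TGen.X i p s) -
        (kdl i i' * kd s p) • FreeAlgebra.ι ℂ (TGen.X i' r q))
  | xxi (i i' : Fin l) (p q r s : Fin m) : TRel m l
      (FreeAlgebra.ι ℂ (TGen.X i p q) * FreeAlgebra.ι ℂ (TGen.Xi i' r s) -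
        FreeAlgebra.ι ℂ (TGen.Xi i' r s) * FreeAlgebra.ι ℂ (TGen.X i p q))
      ((kdl i i' * kd q r) • FreeAlgebra.ι ℂ (TGen.Xi i p s) -
        (kdl i i' * kd s p) • FreeAlgebra.ι ℂ (TGen.Xi i' r q))
  | xixi (i i' : Fin l) (p q r s : Fin m) : TRel m l
      (FreeAlgebra.ι ℂ (TGen.Xi i p q) * FreeAlgebra.ι ℂ (TGen.Xi i' r s) +
        FreeAlgebra.ι ℂ (TGen.Xi i' r s) * FreeAlgebra.ι ℂ (TGen.Xi i p q))
      ((kdl i i' * kd q r) • FreeAlgebra.ι ℂ (TGen.X i p s) +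
        (kdl i i' * kd s p) • FreeAlgebra.ι ℂ (TGen.X i' r q))

/-- The superalgebra `U(Q(m))^{⊗l}`. -/
abbrev TQ (m l : ℕ) := RingQuot (TRel m l)

/-- `x^i_{pq} := 1^{⊗(l-i)} ⊗ e_{pq} ⊗ 1^{⊗(i-1)} ∈ U(Q(m))^{⊗l}`. -/
def xT {m l : ℕ} (i : Fin l) (p q : Fin m) : TQ m l :=
  RingQuot.mkAlgHom ℂ (TRel m l) (FreeAlgebra.ι ℂ (TGen.X i p q))

/-- `ξ^i_{pq} := 1^{⊗(l-i)} ⊗ f_{pq} ⊗ 1^{⊗(i-1)} ∈ U(Q(m))^{⊗l}`. -/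
def xiT {m l : ℕ} (i : Fin l) (p q : Fin m) : TQ m l :=
  RingQuot.mkAlgHom ℂ (TRel m l) (FreeAlgebra.ι ℂ (TGen.Xi i p q))

/-! # The super-Yangian `Y(Q(n))` -/

/-- The index set `{±1, …, ±n}`:  `(false, a)` is the positive index `a` (even),
`(true, a)` is the negative index `-a` (odd). -/
abbrev QIdx (n : ℕ) := Bool × Fin n

/-- Negation `i ↦ -i` on indices. -/
def qneg {n : ℕ} (i : QIdx n) : QIdx n := (!i.1, i.2)

/-- The parity `p(i)`: `0` for positive `i`, `1` for negative `i`. -/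
def qpar {n : ℕ} (i : QIdx n) : ℕ := if i.1 then 1 else 0

/-- Kronecker delta on `{±1, …, ±n}`. -/
def kdq {n : ℕ} (i j : QIdx n) : ℂ := if i = j then 1 else 0

/-- Generators of `Y(Q(n))`: `T m i j` encodes `T^{(m+1)}_{i,j}`. -/
inductive YGen (n : ℕ) : Type
  | T : ℕ → QIdx n → QIdx n → YGen n

/-- `T^{(m)}_{i,j}` in the free algebra, with `T^{(0)}_{i,j} = δ_{ij}`. -/
def Tf {n : ℕ} : ℕ → QIdx n → QIdx n → FreeAlgebra ℂ (YGen n)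
  | 0, i, j => algebraMap ℂ _ (kdq i j)
  | m + 1, i, j => FreeAlgebra.ι ℂ (YGen.T m i j)

/-- The super-commutator `[T^{(a)}_{i,j}, T^{(b)}_{k,l}]` in the free algebra. -/
def ybr {n : ℕ} (a : ℕ) (i j : QIdx n) (b : ℕ) (k l : QIdx n) :
    FreeAlgebra ℂ (YGen n) :=
  Tf a i j * Tf b k l -
    ((-1 : ℂ) ^ ((qpar i + qpar j) * (qpar k + qpar l))) • (Tf b k l * Tf a i j)

/-- The defining relations of the super-Yangian `Y(Q(n))`: for `M, R ≥ 1`,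
`(-1)^{p(i)p(k)+p(i)p(l)+p(k)p(l)} ([T^{(M+1)}_{ij}, T^{(R-1)}_{kl}] - [T^{(M-1)}_{ij}, T^{(R+1)}_{kl}])
 = T^{(M)}_{kj}T^{(R-1)}_{il} + T^{(M-1)}_{kj}T^{(R)}_{il} - T^{(R-1)}_{kj}T^{(M)}_{il}
   - T^{(R)}_{kj}T^{(M-1)}_{il}
   + (-1)^{p(k)+p(l)} (-T^{(M)}_{-k,j}T^{(R-1)}_{-i,l} + T^{(M-1)}_{-k,j}T^{(R)}_{-i,l}
       + T^{(R-1)}_{k,-j}T^{(M)}_{i,-l} - T^{(R)}_{k,-j}T^{(M-1)}_{i,-l})`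
(here `M = m+1`, `R = r+1`), together with `T^{(m)}_{-i,-j} = (-1)^m T^{(m)}_{i,j}`. -/
inductive YRel (n : ℕ) : FreeAlgebra ℂ (YGen n) → FreeAlgebra ℂ (YGen n) → Prop
  | quad (m r : ℕ) (i j k l : QIdx n) : YRel n
      (((-1 : ℂ) ^ (qpar i * qpar k + qpar i * qpar l + qpar k * qpar l)) •
        (ybr (m + 2) i j r k l - ybr m i j (r + 2) k l))
      (Tf (m + 1) k j * Tf r i l + Tf m k j * Tf (r + 1) i l -
        Tf r k j * Tf (m + 1) i l - Tf (r + 1) k j * Tf m i l +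
        ((-1 : ℂ) ^ (qpar k + qpar l)) •
          (-(Tf (m + 1) (qneg k) j * Tf r (qneg i) l) +
            Tf m (qneg k) j * Tf (r + 1) (qneg i) l +
            Tf r k (qneg j) * Tf (m + 1) i (qneg l) -
            Tf (r + 1) k (qneg j) * Tf m i (qneg l)))
  | par (m : ℕ) (i j : QIdx n) : YRel n
      (Tf (m + 1) (qneg i) (qneg j)) (((-1 : ℂ) ^ (m + 1)) • Tf (m + 1) i j)

/-- The super-Yangian `Y(Q(n))`. -/
abbrev YQ (n : ℕ) := RingQuot (YRel n)

/-- The generator `T^{(m)}_{i,j}` of `Y(Q(n))` (with `T^{(0)}_{i,j} = δ_{ij}`). -/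
def TY {n : ℕ} (m : ℕ) (i j : QIdx n) : YQ n :=
  RingQuot.mkAlgHom ℂ (YRel n) (Tf m i j)

/-! # Values of the homomorphisms `U`, `ev`, `ēv` on the generators of `Y(Q(n))`,
and the explicit sums appearing in the main theorems. -/

/-- The value of the homomorphism `U : Y(Q(n)) → U(Q(n))` on the generator
`T^{(r)}_{i,j}`:  `U(T^{(r)}_{i,j}) = (-1)^r e^{(r)}_{j,i}`,
`U(T^{(r)}_{-i,j}) = (-1)^r f^{(r)}_{j,i}` for `i, j > 0`, and the values on the other
generators are forced by `T^{(r)}_{-i,-j} = (-1)^r T^{(r)}_{i,j}`. -/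
def Uval {n : ℕ} (r : ℕ) (i j : QIdx n) : UQ n :=
  (if j.1 then (-1 : ℂ) ^ r else 1) •
    ((-1 : ℂ) ^ r • (if xor i.1 j.1 then fU r j.2 i.2 else eU r j.2 i.2))

/-- The value of the evaluation homomorphism `ev : Y(Q(n)) → U(Q(n))` on `T^{(r)}_{i,j}`:
`ev(T^{(1)}_{i,j}) = -e_{j,i}`, `ev(T^{(1)}_{-i,j}) = -f_{j,i}` for `i, j > 0`,
`ev(T^{(0)}_{i,j}) = δ_{ij}` and `ev(T^{(r)}_{i,j}) = 0` for `r > 1` (with the values on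
the remaining generators forced by `T^{(r)}_{-i,-j} = (-1)^r T^{(r)}_{i,j}`). -/
def evval {n : ℕ} (r : ℕ) (i j : QIdx n) : UQ n :=
  (if j.1 then (-1 : ℂ) ^ r else 1) •
    (match r with
      | 0 => if xor i.1 j.1 then 0 else algebraMap ℂ (UQ n) (kd i.2 j.2)
      | 1 => -(if xor i.1 j.1 then Uf j.2 i.2 else Ue j.2 i.2)
      | _ + 2 => 0)

/-- The value of `ēv = α ∘ ev : Y(Q(n)) → U(Q(n))` on `T^{(r)}_{i,j}`, where `α` is the
principal anti-automorphism of `U(Q(n))`:  `ēv(T^{(1)}_{i,j}) = e_{j,i}`,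
`ēv(T^{(1)}_{-i,j}) = f_{j,i}` for `i, j > 0`, `ēv(T^{(0)}_{i,j}) = δ_{ij}`,
`ēv(T^{(r)}_{i,j}) = 0` for `r > 1`. -/
def bevval {n : ℕ} (r : ℕ) (i j : QIdx n) : UQ n :=
  (if j.1 then (-1 : ℂ) ^ r else 1) •
    (match r with
      | 0 => if xor i.1 j.1 then 0 else algebraMap ℂ (UQ n) (kd i.2 j.2)
      | 1 => (if xor i.1 j.1 then Uf j.2 i.2 else Ue j.2 i.2)
      | _ + 2 => 0)

/-- The sum `Σ_{p_1,…,p_{r-1}} Σ_{l ≥ i_1 ≥ i_2 ≥ … ≥ i_r ≥ 1}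
Π_{a=1}^r (x^{i_a}_{p_{a-1},p_a} + (-1)^{r-a} ξ^{i_a}_{p_{a-1},p_a})`
(with `p_0 = p`, `p_r = q`), an element of `U(Q(m))^{⊗l}`. -/
def chainProdDec (m l : ℕ) (r : ℕ) (p q : Fin m) : TQ m l :=
  ∑ c : Fin (r + 1) → Fin m, ∑ iv : Fin r → Fin l,
    (if c 0 = p ∧ c (Fin.last r) = q ∧ (∀ a b : Fin r, a ≤ b → iv b ≤ iv a)
      then (1 : ℂ) else 0) •
      (List.ofFn fun a : Fin r =>
        xT (iv a) (c a.castSucc) (c a.succ) +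
          ((-1 : ℂ) ^ (r - 1 - a.val)) • xiT (iv a) (c a.castSucc) (c a.succ)).prod

/-- The sum `Σ_{p_1,…,p_{r-1}} Σ_{1 ≤ i_1 < i_2 < … < i_r ≤ l}
Π_{a=1}^r (x^{i_a}_{p_{a-1},p_a} + (-1)^{r-a} ξ^{i_a}_{p_{a-1},p_a})`
(with `p_0 = p`, `p_r = q`), an element of `U(Q(m))^{⊗l}`. -/
def chainProdInc (m l : ℕ) (r : ℕ) (p q : Fin m) : TQ m l :=
  ∑ c : Fin (r + 1) → Fin m, ∑ iv : Fin r → Fin l,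
    (if c 0 = p ∧ c (Fin.last r) = q ∧ (∀ a b : Fin r, a < b → iv a < iv b)
      then (1 : ℂ) else 0) •
      (List.ofFn fun a : Fin r =>
        xT (iv a) (c a.castSucc) (c a.succ) +
          ((-1 : ℂ) ^ (r - 1 - a.val)) • xiT (iv a) (c a.castSucc) (c a.succ)).prod

/-- The elements `z^{(r)}_{±q,p}` of `U(Q(m))^{⊗l}`:  the even (`sgn = false`,
giving `z^{(r)}_{q,p}`) resp. odd (`sgn = true`, giving `z^{(r)}_{-q,p}`) component of
`chainProdDec`, computed using the parity involution `σT` of `U(Q(m))^{⊗l}`;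
`z^{(0)}_{q,p} = δ_{qp}`, `z^{(0)}_{-q,p} = 0`. -/
def zDec {m l : ℕ} (σT : TQ m l →ₐ[ℂ] TQ m l) :
    ℕ → Bool → Fin m → Fin m → TQ m l
  | 0, sgn, q, p => if sgn then 0 else algebraMap ℂ (TQ m l) (kd q p)
  | r + 1, sgn, q, p =>
      (2⁻¹ : ℂ) • (chainProdDec m l (r + 1) p q +
        (if sgn then (-1 : ℂ) else 1) • σT (chainProdDec m l (r + 1) p q))

/-- The elements `z̃^{(r)}_{±q,p}` of `U(Q(m))^{⊗l}` (as `zDec`, with increasing chains). -/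
def zInc {m l : ℕ} (σT : TQ m l →ₐ[ℂ] TQ m l) :
    ℕ → Bool → Fin m → Fin m → TQ m l
  | 0, sgn, q, p => if sgn then 0 else algebraMap ℂ (TQ m l) (kd q p)
  | r + 1, sgn, q, p =>
      (2⁻¹ : ℂ) • (chainProdInc m l (r + 1) p q +
        (if sgn then (-1 : ℂ) else 1) • σT (chainProdInc m l (r + 1) p q))

/-- The explicit formula for the antipode value `S(T^{(r)}_{i,j})` (`r ≥ 1`):
`S(T^{(r)}_{i,j}) = Σ_{m=1}^{r} (-1)^m Σ_{i_1,…,i_{m-1}} Σ_{r_1+⋯+r_m=r, r_a>0}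
(-1)^{ν(i,i_1,…,i_{m-1},j)} T^{(r_1)}_{i,i_1} ⋯ T^{(r_m)}_{i_{m-1},j}` where
`ν(i_0,…,i_m) = Σ_{0≤k<s≤m-1} (p(i_k)+p(i_{k+1}))(p(i_s)+p(i_{s+1}))`. -/
def STval {n : ℕ} (r : ℕ) (i j : QIdx n) : YQ n :=
  ∑ m : Fin r,
    ((-1 : ℂ) ^ (m.val + 1)) •
      ∑ ch : Fin (m.val + 2) → QIdx n, ∑ c : Fin (m.val + 1) → Fin (r + 1),
        (if ch 0 = i ∧ ch (Fin.last (m.val + 1)) = j ∧ (∀ a, 1 ≤ (c a).val) ∧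
              (∑ a, (c a).val) = r
          then ((-1 : ℂ) ^ (∑ a : Fin (m.val + 1), ∑ b : Fin (m.val + 1),
              if a < b then
                (qpar (ch a.castSucc) + qpar (ch a.succ)) *
                  (qpar (ch b.castSucc) + qpar (ch b.succ))
              else 0))
          else 0) •
        (List.ofFn fun a : Fin (m.val + 1) =>
          TY (c a).val (ch a.castSucc) (ch a.succ)).prod

/-- One factor of the chain product. -/
def chF {m l : ℕ} (e : ℕ) (i : Fin l) (p q : Fin m) : TQ m l :=
  xT i p q + ((-1 : ℂ) ^ e) • xiT i p q

/-- The ordered product attached to a chain. -/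
def chP {m l : ℕ} (r : ℕ) (c : Fin (r + 1) → Fin m) (iv : Fin r → Fin l) : TQ m l :=
  (List.ofFn fun a : Fin r => chF (r - 1 - a.val) (iv a) (c a.castSucc) (c a.succ)).prod

lemma chP_cons {m l : ℕ} (s : ℕ) (p : Fin m) (c : Fin (s + 1) → Fin m) (i : Fin l)
    (iv : Fin s → Fin l) :
    chP (s + 1) (Fin.cons p c) (Fin.cons i iv) = chF s i p (c 0) * chP s c iv := by
  unfold chP
  rw [List.ofFn_succ, List.prod_cons]
  congr 1
  congr 1
  congr 1
  funext a
  have h : s + 1 - 1 - (a.succ : Fin (s + 1)).val = s - 1 - a.val := by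
    rw [Fin.val_succ]; omega
  rw [h, ← Fin.succ_castSucc]
  simp only [Fin.cons_succ]

lemma chain_eq (m l r : ℕ) (p q : Fin m) : chainProdDec m l r p q =
    ∑ c : Fin (r + 1) → Fin m, ∑ iv : Fin r → Fin l,
      if c 0 = p ∧ c (Fin.last r) = q ∧ (∀ a b : Fin r, a ≤ b → iv b ≤ iv a)
      then chP r c iv else 0 := by
  unfold chainProdDec chP chF
  simp only [ite_smul, one_smul, zero_smul]

lemma chain_zero (m l : ℕ) (p q : Fin m) :
    chainProdDec m l 0 p q = algebraMap ℂ _ (kd p q) := by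
  rw [chain_eq, ← (Equiv.funUnique (Fin 1) (Fin m)).symm.sum_comp]
  have : ∀ x : Fin m, (((Equiv.funUnique (Fin 1) (Fin m)).symm x) 0 = x) := fun x => rfl
  have h2 : ∀ x : Fin m, (((Equiv.funUnique (Fin 1) (Fin m)).symm x) (Fin.last 0) = x) :=
    fun x => rfl
  simp only [this, h2, chP, kd]
  simp [ite_and]

lemma chain_empty (m s : ℕ) (p q : Fin m) : chainProdDec m 0 (s + 1) p q = 0 := by
  rw [chain_eq]
  simp

lemma anti_cons_last {k s : ℕ} (iv : Fin s → Fin (k + 1)) :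
    (∀ a b : Fin (s + 1), a ≤ b → (Fin.cons (Fin.last k) iv : Fin (s + 1) → Fin (k + 1)) b ≤
      (Fin.cons (Fin.last k) iv : Fin (s + 1) → Fin (k + 1)) a) ↔
    ∀ a b : Fin s, a ≤ b → iv b ≤ iv a := by
  constructor
  · intro h a b hab
    simpa using h a.succ b.succ (by simpa using hab)
  · intro h a b hab
    induction a using Fin.cases with
    | zero => simpa using Fin.le_last _
    | succ a =>
      induction b using Fin.cases with
      | zero => simp at hab
      | succ b => simpa using h a b (by simpa using hab)

lemma chain_succ (n k s : ℕ) (ish : TQ n k →ₐ[ℂ] TQ n (k + 1))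
    (hx : ∀ (a : Fin k) (i j : Fin n), ish (xT a i j) = xT a.castSucc i j)
    (hxi : ∀ (a : Fin k) (i j : Fin n), ish (xiT a i j) = xiT a.castSucc i j)
    (p q : Fin n) :
    chainProdDec n (k + 1) (s + 1) p q =
      (∑ m, chF s (Fin.last k) p m * chainProdDec n (k + 1) s m q) +
        ish (chainProdDec n k (s + 1) p q) := by
  have hish : ∀ (c : Fin (s + 2) → Fin n) (iv : Fin (s + 1) → Fin k),
      ish (chP (s + 1) c iv) = chP (s + 1) c (fun a => (iv a).castSucc) := by
    intro c iv
    unfold chP chF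
    rw [map_list_prod, List.map_ofFn]
    congr 1
    congr 1
    funext a
    simp [hx, hxi]
  -- split by whether the first slot is the last one
  have hsplit : chainProdDec n (k + 1) (s + 1) p q =
      (∑ c : Fin (s + 2) → Fin n, ∑ iv : Fin (s + 1) → Fin (k + 1),
        if iv 0 = Fin.last k then
          (if c 0 = p ∧ c (Fin.last (s + 1)) = q ∧ (∀ a b : Fin (s + 1), a ≤ b → iv b ≤ iv a)
            then chP (s + 1) c iv else 0) else 0) +
      (∑ c : Fin (s + 2) → Fin n, ∑ iv : Fin (s + 1) → Fin (k + 1),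
        if iv 0 = Fin.last k then 0 else
          (if c 0 = p ∧ c (Fin.last (s + 1)) = q ∧ (∀ a b : Fin (s + 1), a ≤ b → iv b ≤ iv a)
            then chP (s + 1) c iv else 0)) := by
    rw [chain_eq, ← Finset.sum_add_distrib]
    refine Finset.sum_congr rfl fun c _ => ?_
    rw [← Finset.sum_add_distrib]
    refine Finset.sum_congr rfl fun iv _ => ?_
    split_ifs <;> simp
  rw [hsplit]
  congr 1
  · rw [← (Fin.consEquiv (fun _ : Fin (s + 2) => Fin n)).sum_comp, Fintype.sum_prod_type]
    have h1 : ∀ (p' : Fin n) (c : Fin (s + 1) → Fin n),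
        (∑ iv : Fin (s + 1) → Fin (k + 1),
        if iv 0 = Fin.last k then
          (if (Fin.cons p' c : Fin (s + 2) → Fin n) 0 = p ∧
              (Fin.cons p' c : Fin (s + 2) → Fin n) (Fin.last (s + 1)) = q ∧
              (∀ a b : Fin (s + 1), a ≤ b → iv b ≤ iv a)
            then chP (s + 1) (Fin.cons p' c) iv else 0) else 0) =
        if p' = p then chF s (Fin.last k) p (c 0) * (∑ iv : Fin s → Fin (k + 1),
          if c (Fin.last s) = q ∧ (∀ a b : Fin s, a ≤ b → iv b ≤ iv a) then chP s c iv else 0)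
        else 0 := by
      intro p' c
      rw [← (Fin.consEquiv (fun _ : Fin (s + 1) => Fin (k + 1))).sum_comp,
        Fintype.sum_prod_type]
      rw [Finset.sum_eq_single (Fin.last k)]
      · have hl : (Fin.cons p' c : Fin (s + 2) → Fin n) (Fin.last (s + 1)) = c (Fin.last s) := by
          rw [← Fin.succ_last, Fin.cons_succ]
        simp only [Fin.consEquiv, Equiv.coe_fn_mk, Fin.cons_zero, if_true, hl, anti_cons_last,
          chP_cons]
        by_cases hp : p' = p
        · subst hp
          simp only [true_and, if_true, Finset.mul_sum, mul_ite, mul_zero]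
        · simp [hp]
      · intro b _ hb
        simp [Fin.consEquiv, hb]
      · simp
    have h2 : ∀ (p' : Fin n) (c : Fin (s + 1) → Fin n),
      (Fin.consEquiv (fun _ : Fin (s + 2) => Fin n)) (p', c) = Fin.cons p' c := fun _ _ => rfl
    simp only [h2, h1]
    rw [Finset.sum_eq_single p (by intro b _ hb; simp [hb]) (by simp)]
    simp only [if_true, chain_eq, Finset.mul_sum]
    conv_rhs => rw [Finset.sum_comm]
    refine Finset.sum_congr rfl fun c _ => ?_
    rw [Finset.sum_eq_single (c 0)]
    · simp
    · intro b _ hb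
      simp [Ne.symm hb]
    · simp
  · rw [chain_eq, map_sum ish]
    refine Finset.sum_congr rfl fun c _ => ?_
    rw [map_sum ish]
    symm
    refine Finset.sum_of_injOn
      (fun (iv : Fin (s + 1) → Fin k) (a : Fin (s + 1)) => (iv a).castSucc) ?_ (by simp) ?_ ?_
    · intro f _ g _ h
      funext a
      exact Fin.castSucc_injective _ (congrFun h a)
    · intro iv _ hiv
      by_cases h0 : iv 0 = Fin.last k
      · simp [h0]
      · rw [if_neg h0, if_neg]
        rintro ⟨-, -, h⟩
        apply hiv
        have hlt : ∀ a, (iv a).val < k := by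
          intro a
          have h1 : (iv a).val ≤ (iv 0).val := h 0 a (Fin.zero_le _)
          have h2 : (iv 0).val ≠ k := fun h' => h0 (Fin.ext h')
          have h3 := (iv 0).isLt
          omega
        exact ⟨fun a => ⟨iv a, hlt a⟩, by simp, by funext a; rfl⟩
    · intro iv _
      rw [if_neg (Fin.castSucc_ne_last _)]
      simp only [Fin.castSucc_le_castSucc_iff]
      rw [apply_ite ish, map_zero, hish]

lemma conv_rec {M : Type*} [Ring M] [Algebra ℂ M] (X Y : M) (A B e f E F : ℕ → M)
    (hA0 : A 0 = 1) (hB0 : B 0 = 0)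
    (hA : ∀ m, A (m + 1) = X * A m + (-1 : ℂ) ^ m • (Y * B m))
    (hB : ∀ m, B (m + 1) = X * B m + (-1 : ℂ) ^ m • (Y * A m))
    (hE : ∀ s, E s = ∑ t ∈ Finset.range (s + 1),
      (A (s - t) * e t + (-1 : ℂ) ^ t • (B (s - t) * f t)))
    (hF : ∀ s, F s = ∑ t ∈ Finset.range (s + 1),
      (A (s - t) * f t + (-1 : ℂ) ^ t • (B (s - t) * e t))) (s : ℕ) :
    E (s + 1) = X * E s + (-1 : ℂ) ^ s • (Y * F s) + e (s + 1) := by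
  rw [hE (s + 1), Finset.sum_range_succ]
  congr 1
  · rw [hE s, hF s, Finset.mul_sum, Finset.mul_sum, Finset.smul_sum, ← Finset.sum_add_distrib]
    refine Finset.sum_congr rfl fun t ht => ?_
    have ht' : t ≤ s := by simpa [Nat.lt_succ_iff] using ht
    obtain ⟨d, rfl⟩ := Nat.exists_eq_add_of_le ht'
    have h1 : t + d + 1 - t = d + 1 := by omega
    have h2 : t + d - t = d := by omega
    have hsq : (-1 : ℂ) ^ t * (-1) ^ t = 1 := by
      rw [← mul_pow]; simp
    have h3 : (-1 : ℂ) ^ (t + d) * (-1) ^ t = (-1) ^ d := by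
      rw [pow_add, mul_right_comm, hsq, one_mul]
    rw [h1, h2, hA, hB]
    simp only [add_mul, mul_add, smul_add, smul_mul_assoc, mul_smul_comm, smul_smul, mul_assoc,
      h3, ← pow_add]
    abel
  · simp [hA0, hB0]

/-- Chain sums as matrices. -/
def chM (n k s : ℕ) : Matrix (Fin n) (Fin n) (TQ n k) :=
  Matrix.of fun p q => chainProdDec n k s p q

/-- The matrix of even generators in the last slot. -/
def Xm (n k : ℕ) : Matrix (Fin n) (Fin n) (TQ n (k + 1)) :=
  Matrix.of fun p q => xT (Fin.last k) p q

/-- The matrix of odd generators in the last slot. -/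
def Ym (n k : ℕ) : Matrix (Fin n) (Fin n) (TQ n (k + 1)) :=
  Matrix.of fun p q => xiT (Fin.last k) p q

lemma chM_zero (n k : ℕ) : chM n k 0 = 1 := by
  ext p q
  simp only [chM, Matrix.of_apply, chain_zero, kd, Matrix.one_apply]
  split_ifs <;> simp

lemma chM_succ (n k s : ℕ) (ish : TQ n k →ₐ[ℂ] TQ n (k + 1))
    (hx : ∀ (a : Fin k) (i j : Fin n), ish (xT a i j) = xT a.castSucc i j)
    (hxi : ∀ (a : Fin k) (i j : Fin n), ish (xiT a i j) = xiT a.castSucc i j) :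
    chM n (k + 1) (s + 1) = Xm n k * chM n (k + 1) s + (-1 : ℂ) ^ s • (Ym n k * chM n (k + 1) s)
      + ish.mapMatrix (chM n k (s + 1)) := by
  ext p q
  simp only [chM, Xm, Ym, Matrix.of_apply, Matrix.add_apply, Matrix.smul_apply, Matrix.mul_apply,
    AlgHom.mapMatrix_apply, Matrix.map_apply]
  rw [chain_succ n k s ish hx hxi]
  simp only [chF, add_mul, Finset.sum_add_distrib, Finset.smul_sum, smul_mul_assoc]

/-- `E s`, `F s` are the even and odd components of the chain sums. -/
def goodEF (n l k : ℕ) (E F : ℕ → Matrix (Fin n) (Fin n) (TQ n k)) : Prop :=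
  (∀ s, E s + F s = chM n k s) ∧
  ∀ σ τ : TQ n k →ₐ[ℂ] TQ n l,
    (∀ (a : Fin k) (i j : Fin n), σ (xT a i j) = τ (xT a i j)) →
    (∀ (a : Fin k) (i j : Fin n), σ (xiT a i j) = -τ (xiT a i j)) →
    ∀ s, σ.mapMatrix (E s) = τ.mapMatrix (E s) ∧ σ.mapMatrix (F s) = -τ.mapMatrix (F s)

lemma good_zero (n l : ℕ) : goodEF n l 0 (fun s => if s = 0 then 1 else 0) (fun _ => 0) := by
  constructor
  · intro s
    cases s with
    | zero => simp [chM_zero]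
    | succ s =>
      ext p q
      simp [chM, chain_empty]
  · intro σ τ _ _ s
    constructor
    · by_cases h : s = 0
      · simp only [h, if_true, map_one]
      · simp only [h, if_false, map_zero]
    · simp only [map_zero, neg_zero]

lemma neg_aux1 {M : Type*} [Ring M] [Algebra ℂ M] (X Y E F e : M) (c : ℂ) :
    X * E + c • (-Y * -F) + e = X * E + c • (Y * F) + e := by
  simp

lemma neg_aux2 {M : Type*} [Ring M] [Algebra ℂ M] (X Y E F e : M) (c : ℂ) :
    X * -F + c • (-Y * E) + -e = -(X * F + c • (Y * E) + e) := by
  simp only [neg_mul, mul_neg, smul_neg, neg_add]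

lemma good_step (n l k : ℕ) (ish : TQ n k →ₐ[ℂ] TQ n (k + 1))
    (hx : ∀ (a : Fin k) (i j : Fin n), ish (xT a i j) = xT a.castSucc i j)
    (hxi : ∀ (a : Fin k) (i j : Fin n), ish (xiT a i j) = xiT a.castSucc i j)
    (e f : ℕ → Matrix (Fin n) (Fin n) (TQ n k))
    (E F : ℕ → Matrix (Fin n) (Fin n) (TQ n (k + 1)))
    (hg : goodEF n l k e f) (hE0 : E 0 = 1) (hF0 : F 0 = 0)
    (hE : ∀ s, E (s + 1) = Xm n k * E s + (-1 : ℂ) ^ s • (Ym n k * F s)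
      + ish.mapMatrix (e (s + 1)))
    (hF : ∀ s, F (s + 1) = Xm n k * F s + (-1 : ℂ) ^ s • (Ym n k * E s)
      + ish.mapMatrix (f (s + 1))) :
    goodEF n l (k + 1) E F := by
  obtain ⟨h1, h2⟩ := hg
  constructor
  · intro s
    induction s with
    | zero => rw [hE0, hF0, chM_zero, add_zero]
    | succ s ih =>
      rw [chM_succ n k s ish hx hxi, ← ih, ← h1, hE, hF, map_add]
      simp only [mul_add, smul_add]
      abel
  · intro σ τ hσ hτ
    have hX : σ.mapMatrix (Xm n k) = τ.mapMatrix (Xm n k) := by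
      ext p q
      exact hσ _ _ _
    have hY : σ.mapMatrix (Ym n k) = -τ.mapMatrix (Ym n k) := by
      ext p q
      exact hτ _ _ _
    have h3 : ∀ s, σ.mapMatrix (ish.mapMatrix (e s)) = τ.mapMatrix (ish.mapMatrix (e s)) ∧
        σ.mapMatrix (ish.mapMatrix (f s)) = -τ.mapMatrix (ish.mapMatrix (f s)) := by
      intro s
      have := h2 (σ.comp ish) (τ.comp ish) (by intro a i j; simp [hx, hσ])
        (by intro a i j; simp [hxi, hτ]) s
      exact this
    intro s
    induction s with
    | zero => rw [hE0, hF0]; simp only [map_one, map_zero, neg_zero, and_self]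
    | succ s ih =>
      rw [hE, hF]
      simp only [map_add, map_mul, map_smul, hX, hY, ih.1, ih.2, (h3 (s + 1)).1, (h3 (s + 1)).2]
      constructor
      · exact neg_aux1 _ _ _ _ _ _
      · exact neg_aux2 _ _ _ _ _ _

lemma TY_neg {n : ℕ} (t : ℕ) (b : Bool) (a m : Fin n) :
    (TY t (b, a) (true, m) : YQ n) = (-1 : ℂ) ^ t • TY t (!b, a) (false, m) := by
  cases t with
  | zero =>
    unfold TY Tf kdq
    cases b <;> simp
  | succ t =>
    have := RingQuot.mkAlgHom_rel ℂ (YRel.par t (!b, a) ((false, m) : QIdx n))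
    rw [map_smul] at this
    simpa [qneg, TY] using this

lemma TY_zero {n : ℕ} (i j : QIdx n) :
    (TY 0 i j : YQ n) = algebraMap ℂ _ (kdq i j) := by
  unfold TY Tf
  simp

/-- Even part matrices of `G k`. -/
def GE {n k : ℕ} (G : YQ n →ₐ[ℂ] TQ n k) (b : Bool) (s : ℕ) :
    Matrix (Fin n) (Fin n) (TQ n k) :=
  Matrix.of fun p q => (-1 : ℂ) ^ s • G (TY s (b, q) (false, p))

lemma GE_false_zero {n k : ℕ} (G : YQ n →ₐ[ℂ] TQ n k) : GE G false 0 = 1 := by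
  ext p q
  simp only [GE, Matrix.of_apply, TY_zero, kdq, AlgHom.commutes, Matrix.one_apply, pow_zero,
    one_smul, Prod.mk.injEq, true_and]
  by_cases h : p = q
  · simp [h]
  · simp [h, Ne.symm h]

lemma GE_true_zero {n k : ℕ} (G : YQ n →ₐ[ℂ] TQ n k) : GE G true 0 = 0 := by
  ext p q
  simp [GE, TY_zero, kdq]

lemma eU_succ {n : ℕ} (m : ℕ) (i j : Fin n) : (eU (m + 1) i j : UQ n) =
    (∑ k, Ue i k * eU m k j) + (-1 : ℂ) ^ m • ∑ k, Uf i k * fU m k j := rfl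

lemma fU_succ {n : ℕ} (m : ℕ) (i j : Fin n) : (fU (m + 1) i j : UQ n) =
    (∑ k, Ue i k * fU m k j) + (-1 : ℂ) ^ m • ∑ k, Uf i k * eU m k j := rfl

/-- Matrices of `e^{(m)}`, `f^{(m)}` under a homomorphism. -/
def Am {n k : ℕ} (em : UQ n →ₐ[ℂ] TQ n k) (m : ℕ) : Matrix (Fin n) (Fin n) (TQ n k) :=
  Matrix.of fun p q => em (eU m p q)

/-- Matrices of `f^{(m)}` under a homomorphism. -/
def Bm {n k : ℕ} (em : UQ n →ₐ[ℂ] TQ n k) (m : ℕ) : Matrix (Fin n) (Fin n) (TQ n k) :=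
  Matrix.of fun p q => em (fU m p q)

lemma Am_zero {n k : ℕ} (em : UQ n →ₐ[ℂ] TQ n k) : Am em 0 = 1 := by
  ext p q
  have : (eU 0 p q : UQ n) = algebraMap ℂ _ (kd p q) := rfl
  simp only [Am, Matrix.of_apply, this, AlgHom.commutes, kd, Matrix.one_apply]
  split_ifs <;> simp

lemma Bm_zero {n k : ℕ} (em : UQ n →ₐ[ℂ] TQ n k) : Bm em 0 = 0 := by
  ext p q
  have : (fU 0 p q : UQ n) = 0 := rfl
  simp [Bm, this]

lemma Am_succ {n k : ℕ} (em : UQ n →ₐ[ℂ] TQ n (k + 1))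
    (hx : ∀ i j : Fin n, em (Ue i j) = xT (Fin.last k) i j)
    (hxi : ∀ i j : Fin n, em (Uf i j) = xiT (Fin.last k) i j) (m : ℕ) :
    Am em (m + 1) = Xm n k * Am em m + (-1 : ℂ) ^ m • (Ym n k * Bm em m) := by
  ext p q
  simp only [Am, Bm, Xm, Ym, Matrix.of_apply, Matrix.add_apply, Matrix.smul_apply,
    Matrix.mul_apply, eU_succ, map_add, map_sum, map_smul, map_mul, hx, hxi]

lemma Bm_succ {n k : ℕ} (em : UQ n →ₐ[ℂ] TQ n (k + 1))
    (hx : ∀ i j : Fin n, em (Ue i j) = xT (Fin.last k) i j)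
    (hxi : ∀ i j : Fin n, em (Uf i j) = xiT (Fin.last k) i j) (m : ℕ) :
    Bm em (m + 1) = Xm n k * Bm em m + (-1 : ℂ) ^ m • (Ym n k * Am em m) := by
  ext p q
  simp only [Am, Bm, Xm, Ym, Matrix.of_apply, Matrix.add_apply, Matrix.smul_apply,
    Matrix.mul_apply, fU_succ, map_add, map_sum, map_smul, map_mul, hx, hxi]

lemma neg_one_sq_pow (s : ℕ) : (-1 : ℂ) ^ s * (-1) ^ s = 1 := by
  rw [← mul_pow]; simp

lemma GE_conv {n k : ℕ} (G : YQ n →ₐ[ℂ] TQ n k) (G' : YQ n →ₐ[ℂ] TQ n (k + 1))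
    (em : UQ n →ₐ[ℂ] TQ n (k + 1)) (ish : TQ n k →ₐ[ℂ] TQ n (k + 1))
    (h : ∀ (s : ℕ) (i j : QIdx n),
      G' (TY s i j) =
        ∑ t : Fin (s + 1), ∑ kk : QIdx n,
          em (Uval (s - t.val) kk j) * ish (G (TY t.val i kk))) (b : Bool) (s : ℕ) :
    GE G' b s = ∑ t ∈ Finset.range (s + 1),
      (Am em (s - t) * ish.mapMatrix (GE G b t) +
        (-1 : ℂ) ^ t • (Bm em (s - t) * ish.mapMatrix (GE G (!b) t))) := by
  ext p q
  simp only [GE, Am, Bm, Matrix.of_apply, Matrix.sum_apply, Matrix.add_apply, Matrix.smul_apply,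
    Matrix.mul_apply, AlgHom.mapMatrix_apply, Matrix.map_apply, h]
  rw [Fin.sum_univ_eq_sum_range (fun t => ∑ kk : QIdx n,
          em (Uval (s - t) kk (false, p)) * ish (G (TY t (b, q) kk))), Finset.smul_sum]
  refine Finset.sum_congr rfl fun t ht => ?_
  have ht' : t ≤ s := by simpa [Nat.lt_succ_iff] using ht
  obtain ⟨d, rfl⟩ := Nat.exists_eq_add_of_le ht'
  have h2 : t + d - t = d := by omega
  have h3 : (-1 : ℂ) ^ (t + d) * (-1) ^ d = (-1) ^ t := by
    rw [pow_add, mul_assoc, neg_one_sq_pow, mul_one]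
  have h4 : (-1 : ℂ) ^ (t + d) * ((-1) ^ t * (-1) ^ d) = (-1) ^ t * (-1) ^ t := by
    rw [mul_left_comm, h3]
  rw [h2, Fintype.sum_prod_type, Fintype.sum_bool]
  refine Eq.trans (smul_add _ _ _) ((add_comm _ _).trans ?_)
  congr 1
  · rw [Finset.smul_sum]
    refine Finset.sum_congr rfl fun m _ => ?_
    simp only [Uval, Bool.xor_false, Bool.false_eq_true, if_false, one_smul, map_smul,
      smul_mul_assoc, mul_smul_comm, smul_smul, one_mul, h3]
  · rw [Finset.smul_sum, Finset.smul_sum]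
    refine Finset.sum_congr rfl fun m _ => ?_
    simp only [Uval, Bool.xor_false, Bool.false_eq_true, if_false, if_true, one_smul, map_smul,
      smul_mul_assoc, mul_smul_comm, smul_smul, one_mul, h4, TY_neg]

/-- Let `n, l ≥ 1`, `1 ≤ p,q ≤ n` and `r ≥ 1`.  Then in
`U(Q(n))^{⊗l}`, `U^{⊗l}∘Δ_l^{op}(T^{(r)}_{q,p})` equals `(-1)^r` times the even component
of `Σ_{p_1,…,p_{r-1}} Σ_{l ≥ i_1 ≥ … ≥ i_r ≥ 1} Π_{a=1}^r
(x^{i_a}_{p_{a-1},p_a} + (-1)^{r-a} ξ^{i_a}_{p_{a-1},p_a})` (`p_0 = p`, `p_r = q`), and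
`U^{⊗l}∘Δ_l^{op}(T^{(r)}_{-q,p})` equals `(-1)^r` times its odd component.
Here `G k = U^{⊗k}∘Δ_k^{op} : Y(Q(n)) → U(Q(n))^{⊗k}` is characterized by its values on
the generators: `G 1 = U` and
`G (k+1) (T^{(s)}_{i,j}) = Σ_{t≤s} Σ_m (1^{⊗k} ⊗ U(T^{(s-t)}_{m,j})) · (Δ_k^{op}-part)`,
following `Δ^{op}(T^{(s)}_{i,j}) = Σ_t Σ_m T^{(s-t)}_{m,j} ⊗ T^{(t)}_{i,m}`;  `emb k a`
is the embedding of `U(Q(n))` into the `a`-th tensor slot, `ish k` the slot-preserving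
embedding `U(Q(n))^{⊗k} → U(Q(n))^{⊗(k+1)}`, and `σT` the parity involution. -/
theorem statement10 (n l : ℕ) (hn : 0 < n) (hl : 1 ≤ l) (p q : Fin n)
    (r : ℕ) (hr : 1 ≤ r)
    (σT : TQ n l →ₐ[ℂ] TQ n l)
    (hσTx : ∀ (a : Fin l) (i j : Fin n), σT (xT a i j) = xT a i j)
    (hσTxi : ∀ (a : Fin l) (i j : Fin n), σT (xiT a i j) = -xiT a i j)
    (emb : ∀ k : ℕ, Fin k → (UQ n →ₐ[ℂ] TQ n k))
    (hembx : ∀ (k : ℕ) (a : Fin k) (i j : Fin n), emb k a (Ue i j) = xT a i j)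
    (hembxi : ∀ (k : ℕ) (a : Fin k) (i j : Fin n), emb k a (Uf i j) = xiT a i j)
    (ish : ∀ k : ℕ, TQ n k →ₐ[ℂ] TQ n (k + 1))
    (hishx : ∀ (k : ℕ) (a : Fin k) (i j : Fin n), ish k (xT a i j) = xT a.castSucc i j)
    (hishxi : ∀ (k : ℕ) (a : Fin k) (i j : Fin n), ish k (xiT a i j) = xiT a.castSucc i j)
    (G : ∀ k : ℕ, YQ n →ₐ[ℂ] TQ n k)
    (hG1 : ∀ (s : ℕ) (i j : QIdx n), G 1 (TY s i j) = emb 1 0 (Uval s i j))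
    (hGstep : ∀ (k : ℕ), 1 ≤ k → ∀ (s : ℕ) (i j : QIdx n),
      G (k + 1) (TY s i j) =
        ∑ t : Fin (s + 1), ∑ kk : QIdx n,
          emb (k + 1) (Fin.last k) (Uval (s - t.val) kk j) *
            ish k (G k (TY t.val i kk))) :
    G l (TY r (false, q) (false, p)) =
      ((-1 : ℂ) ^ r) • ((2⁻¹ : ℂ) •
        (chainProdDec n l r p q + σT (chainProdDec n l r p q))) ∧
    G l (TY r (true, q) (false, p)) =
      ((-1 : ℂ) ^ r) • ((2⁻¹ : ℂ) •
        (chainProdDec n l r p q - σT (chainProdDec n l r p q))) := by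

  have hgood : ∀ k : ℕ, goodEF n l (k + 1) (GE (G (k + 1)) false) (GE (G (k + 1)) true) := by
    intro k
    induction k with
    | zero =>
      have hA : ∀ s, GE (G 1) false s = Am (emb 1 0) s := by
        intro s
        ext a b
        simp only [GE, Am, Matrix.of_apply, hG1, Uval, Bool.xor_false, Bool.false_eq_true,
          if_false, one_smul, map_smul, smul_smul, one_mul, neg_one_sq_pow]
      have hB : ∀ s, GE (G 1) true s = Bm (emb 1 0) s := by
        intro s
        ext a b
        simp only [GE, Bm, Matrix.of_apply, hG1, Uval, Bool.xor_false, Bool.false_eq_true,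
          if_false, if_true, one_smul, map_smul, smul_smul, one_mul, neg_one_sq_pow]
      refine good_step n l 0 (ish 0) (hishx 0) (hishxi 0) _ _ _ _ (good_zero n l)
        (GE_false_zero _) (GE_true_zero _) ?_ ?_
      · intro s
        rw [hA, hA, hB, Am_succ (k := 0) (emb 1 0) (hembx 1 0) (hembxi 1 0)]
        simp only [Nat.succ_ne_zero, if_false, map_zero, add_zero]
      · intro s
        rw [hA, hB, hB, Bm_succ (k := 0) (emb 1 0) (hembx 1 0) (hembxi 1 0)]
        simp only [map_zero, add_zero]
    | succ k ih =>
      have hc := GE_conv (G (k + 1)) (G (k + 1 + 1)) (emb (k + 1 + 1) (Fin.last (k + 1)))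
        (ish (k + 1)) (hGstep (k + 1) (by omega))
      have hAs := Am_succ (emb (k + 1 + 1) (Fin.last (k + 1))) (hembx _ _) (hembxi _ _)
      have hBs := Bm_succ (emb (k + 1 + 1) (Fin.last (k + 1))) (hembx _ _) (hembxi _ _)
      refine good_step n l (k + 1) (ish (k + 1)) (hishx _) (hishxi _) _ _ _ _ ih
        (GE_false_zero _) (GE_true_zero _) ?_ ?_
      · exact conv_rec _ _ _ _ (fun s => (ish (k + 1)).mapMatrix (GE (G (k + 1)) false s))
          (fun s => (ish (k + 1)).mapMatrix (GE (G (k + 1)) true s)) _ _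
          (Am_zero _) (Bm_zero _) hAs hBs (hc false) (hc true)
      · exact conv_rec _ _ _ _ (fun s => (ish (k + 1)).mapMatrix (GE (G (k + 1)) true s))
          (fun s => (ish (k + 1)).mapMatrix (GE (G (k + 1)) false s)) _ _
          (Am_zero _) (Bm_zero _) hAs hBs (hc true) (hc false)
  obtain ⟨k, rfl⟩ : ∃ k, l = k + 1 := ⟨l - 1, by omega⟩
  obtain ⟨h1, h2⟩ := hgood k
  have h3 := h2 σT (AlgHom.id ℂ _) (by simpa using hσTx) (by simpa using hσTxi) r
  have hC : chainProdDec n (k + 1) r p q =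
      GE (G (k + 1)) false r p q + GE (G (k + 1)) true r p q :=
    (congrFun (congrFun (h1 r) p) q).symm
  have hE : σT (GE (G (k + 1)) false r p q) = GE (G (k + 1)) false r p q :=
    congrFun (congrFun h3.1 p) q
  have hF : σT (GE (G (k + 1)) true r p q) = -GE (G (k + 1)) true r p q :=
    congrFun (congrFun h3.2 p) q
  have hGE : ∀ b, G (k + 1) (TY r (b, q) (false, p)) =
      (-1 : ℂ) ^ r • GE (G (k + 1)) b r p q := by
    intro b
    simp only [GE, Matrix.of_apply, smul_smul, one_mul, neg_one_sq_pow, one_smul]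
  rw [hC, map_add, hE, hF, hGE, hGE]
  constructor
  · congr 1
    module
  · congr 1
    module
end
end

section
/- Let l divide n. The assignments φ(T_{q,p}^{(r)}) = (−1)^r π(e_{lp, l(q−1)+1}^{(l+r−1)}) and φ(T_{−q,p}^{(r)}) = (−1)^r π(f_{lp, l(q−1)+1}^{(l+r−1)}) for 1 ≤ p,q ≤ n/l and r ≥ 1 extend to a surjective algebra homomorphism φ : Y(Q(n/l)) → W_χ. -/
noncomputable section
open scoped Classical

set_option linter.unusedVariables false

/-- unified generators -/
def gG {n : ℕ} (s : Bool) (i j : Fin n) : UQ n := bif s then Uf i j else Ue i j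
/-- unified Sergeev elements -/
def gX {n : ℕ} (m : ℕ) (s : Bool) (i j : Fin n) : UQ n := bif s then fU m i j else eU m i j
/-- sign of a product of parities -/
def ss (s t : Bool) : ℂ := bif (s && t) then -1 else 1

theorem Ue_rel {n : ℕ} (i j k l : Fin n) :
    (Ue i j * Ue k l : UQ n) = Ue k l * Ue i j + (kd j k • Ue i l - kd l i • Ue k j) := by
  have := RingQuot.mkAlgHom_rel ℂ (QRel.ee i j k l)
  simp only [map_sub, map_mul, map_smul] at this
  rw [← sub_eq_iff_eq_add']
  exact this

theorem Uef_rel {n : ℕ} (i j k l : Fin n) :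
    (Ue i j * Uf k l : UQ n) = Uf k l * Ue i j + (kd j k • Uf i l - kd l i • Uf k j) := by
  have := RingQuot.mkAlgHom_rel ℂ (QRel.ef i j k l)
  simp only [map_sub, map_mul, map_smul] at this
  rw [← sub_eq_iff_eq_add']
  exact this

theorem Uff_rel {n : ℕ} (i j k l : Fin n) :
    (Uf i j * Uf k l : UQ n) = - (Uf k l * Uf i j) + (kd j k • Ue i l + kd l i • Ue k j) := by
  have := RingQuot.mkAlgHom_rel ℂ (QRel.ff i j k l)
  simp only [map_add, map_mul, map_smul] at this
  have h2 : (Uf i j * Uf k l : UQ n) + (Uf k l * Uf i j) =  (kd j k • Ue i l + kd l i • Ue k j) := this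
  rw [← h2]; abel

theorem gG_rel {n : ℕ} (s t : Bool) (i j k l : Fin n) :
    (gG s i j * gG t k l : UQ n) = ss s t • (gG t k l * gG s i j) +
      kd j k • gG (xor s t) i l - (ss s t * kd l i) • gG (xor s t) k j := by
  cases s <;> cases t <;> simp only [gG, ss, cond_true, cond_false, Bool.and_false, Bool.and_true,
    Bool.xor_false, Bool.xor_true, Bool.not_true, Bool.not_false]
  · rw [Ue_rel]; module
  · rw [Uef_rel]; module
  · rw [Uef_rel k l i j]; module
  · rw [Uff_rel]; module

/-- row sums -/
def gS {n : ℕ} (u : Bool) (m : ℕ) (s : Bool) (i j : Fin n) : UQ n := ∑ a, gG u i a * gX m s a j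

theorem gX_succ {n : ℕ} (m : ℕ) (s : Bool) (i j : Fin n) :
    gX (m + 1) s i j = gS false m s i j + (-1 : ℂ) ^ m • gS true m (!s) i j := by
  cases s <;> rfl

theorem gX_zero {n : ℕ} (s : Bool) (i j : Fin n) :
    gX 0 s i j = (bif s then 0 else kd i j) • (1 : UQ n) := by
  cases s
  · simp [gX, eU, efU, Algebra.algebraMap_eq_smul_one]
  · simp [gX, fU, efU]

theorem kd_sum {n : ℕ} (i : Fin n) (f : Fin n → UQ n) :
    ∑ a, kd a i • f a = f i := by
  simp [kd, ite_smul]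

theorem kd_sum' {n : ℕ} (i : Fin n) (f : Fin n → UQ n) :
    ∑ a, kd i a • f a = f i := by
  simp [kd, ite_smul]

/-- twisting sign -/
def pw (t : Bool) (m : ℕ) : ℂ := bif t then (-1) ^ m else 1

/-- Commutation of a generator with Sergeev's elements. -/
def CommAt (n m : ℕ) : Prop := ∀ (t s : Bool) (i j k l : Fin n),
    (gG t i j * gX m s k l : UQ n) = ss t s • (gX m s k l * gG t i j) +
      (pw t (m + 1) * kd j k) • gX m (xor s t) i l - (ss t s * kd l i) • gX m (xor s t) k j

theorem gS_comm {n m : ℕ} (H : CommAt n m) (t u s : Bool) (i j k l : Fin n) :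
    (gG t i j * gS u m s k l : UQ n) = (ss t u * ss t s) • (gS u m s k l * gG t i j)
      + (kd j k • gS (xor t u) m s i l - ss t u • (gG (xor t u) k j * gX m s i l))
      + ss t u • (pw t (m + 1) • (gG u k j * gX m (xor s t) i l)
        - (ss t s * kd l i) • gS u m (xor s t) k j) := by
  have h1 : ∀ a, gG t i j * (gG u k a * gX m s a l) =
      (ss t u * ss t s) • (gG u k a * gX m s a l * gG t i j)
      + kd j k • (gG (xor t u) i a * gX m s a l)
      - ss t u • (kd a i • (gG (xor t u) k j * gX m s a l))
      + ss t u • (pw t (m + 1) • (kd j a • (gG u k a * gX m (xor s t) i l)))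
      - (ss t u * (ss t s * kd l i)) • (gG u k a * gX m (xor s t) a j) := by
    intro a
    rw [← mul_assoc, gG_rel t u i j k a, sub_mul, add_mul, smul_mul_assoc, mul_assoc (gG u k a),
      H t s i j a l]
    simp only [mul_sub, mul_add, smul_mul_assoc, mul_smul_comm, mul_assoc]
    module
  simp only [gS]
  rw [Finset.mul_sum, Finset.sum_congr rfl (fun a _ => h1 a)]
  simp only [Finset.sum_add_distrib, Finset.sum_sub_distrib, ← Finset.smul_sum, kd_sum, kd_sum',
    ← Finset.sum_mul]
  module

theorem comm_all (n : ℕ) (m : ℕ) : CommAt n m := by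
  induction m with
  | zero =>
    intro t s i j k l
    simp only [gX_zero]
    cases t <;> cases s <;> simp [ss, pw, kd, smul_smul, eq_comm]
    · by_cases h1 : i = l <;> by_cases h2 : j = k <;> simp [h1, h2]
    · by_cases h1 : i = l <;> by_cases h2 : j = k <;> simp [h1, h2]
  | succ m ih =>
    intro t s i j k l
    rw [gX_succ m s k l, mul_add, mul_smul_comm, gS_comm ih, gS_comm ih]
    simp only [gX_succ]
    rcases neg_one_pow_eq_or ℂ m with h | h <;> cases t <;> cases s <;>
      simp only [ss, pw, pow_succ, h, cond_true, cond_false, Bool.and_false, Bool.and_true,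
        Bool.xor_false, Bool.xor_true, Bool.not_true, Bool.not_false, add_mul, smul_mul_assoc] <;>
      module

/-- Associativity of the powers. -/
theorem gX_add {n : ℕ} (r m : ℕ) (s : Bool) (k j : Fin n) :
    (∑ a, gX r false k a * gX m s a j) + (-1 : ℂ) ^ m • (∑ a, gX r true k a * gX m (!s) a j)
      = gX (r + m) s k j := by
  induction r generalizing s k with
  | zero =>
    simp only [gX_zero, smul_mul_assoc, one_mul, cond_true, cond_false, kd_sum', zero_add,
      zero_smul, zero_mul, Finset.sum_const_zero, smul_zero, add_zero]
  | succ r ih =>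
    have h1 : ∀ s t : Bool, ∑ a, gX (r + 1) t k a * gX m s a j =
        ∑ b, gG false k b * (∑ a, gX r t b a * gX m s a j) + (-1 : ℂ) ^ r •
        ∑ b, gG true k b * (∑ a, gX r (!t) b a * gX m s a j) := by
      intro s t
      simp only [gX_succ, gS, add_mul, Finset.sum_mul, Finset.mul_sum, smul_mul_assoc, mul_assoc,
        Finset.sum_add_distrib, ← Finset.smul_sum]
      rw [Finset.sum_comm]
      congr 2
      rw [Finset.sum_comm]
    rw [show r + 1 + m = (r + m) + 1 by ring, gX_succ, gS, gS, h1, h1]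
    simp only [← ih, mul_add, Finset.sum_add_distrib, mul_smul_comm, ← Finset.smul_sum, pow_add,
      Bool.not_not, Bool.not_true, Bool.not_false]
    rcases neg_one_pow_eq_or ℂ m with h | h <;> rw [h] <;> module



/-- super bracket of Sergeev's elements -/
def gBr {n : ℕ} (m r : ℕ) (s t : Bool) (i j k l : Fin n) : UQ n :=
  gX m s i j * gX r t k l - ss s t • (gX r t k l * gX m s i j)

/-- left recursion operator -/
def gL {n : ℕ} (m : ℕ) (i : Fin n) (Z : Bool → Fin n → UQ n) (s : Bool) : UQ n :=
  ∑ a, gG false i a * Z s a + (-1 : ℂ) ^ m • ∑ a, gG true i a * Z (!s) a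

theorem gBr_aux {n : ℕ} (m r : ℕ) (u s t : Bool) (i j k l : Fin n) :
    gS u m s i j * gX r t k l - (ss u t * ss s t) • (gX r t k l * gS u m s i j) =
      ∑ a, gG u i a * gBr m r s t a j k l
      + ss s t • (pw u (r + 1) • (gX r (xor t u) i l * gX m s k j)
        - (ss u t * kd l i) • ∑ a, gX r (xor t u) k a * gX m s a j) := by
  have h1 : ∀ a, gG u i a * gX m s a j * gX r t k l
      - (ss u t * ss s t) • (gX r t k l * (gG u i a * gX m s a j)) =
      gG u i a * gBr m r s t a j k l
      + ss s t • (pw u (r + 1) • (kd a k • (gX r (xor t u) i l * gX m s a j))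
        - (ss u t * kd l i) • (gX r (xor t u) k a * gX m s a j)) := by
    intro a
    have h2 : ss u t • (gX r t k l * gG u i a) = gG u i a * gX r t k l
        - (pw u (r + 1) * kd a k) • gX r (xor t u) i l
        + (ss u t * kd l i) • gX r (xor t u) k a := by
      rw [comm_all n r u t i a k l]; abel
    rw [← mul_assoc (gX r t k l), mul_smul, smul_comm, ← smul_mul_assoc, h2]
    simp only [gBr, mul_sub, add_mul, sub_mul, smul_mul_assoc, mul_smul_comm, mul_assoc]
    module
  simp only [gS]
  rw [Finset.sum_mul, Finset.mul_sum, Finset.smul_sum, ← Finset.sum_sub_distrib,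
    Finset.sum_congr rfl (fun a _ => h1 a)]
  simp only [Finset.sum_add_distrib, Finset.sum_sub_distrib, ← Finset.smul_sum, kd_sum]

theorem gBr_succ {n : ℕ} (m r : ℕ) (s t : Bool) (i j k l : Fin n) :
    gBr (m + 1) r s t i j k l = gL m i (fun s a => gBr m r s t a j k l) s
      + ss s t • (gX r t i l * gX m s k j)
      + ((-1 : ℂ) ^ (m + r + 1) * ss (!s) t) • (gX r (!t) i l * gX m (!s) k j)
      - (ss s t * pw t m * kd l i) • gX (r + m) (xor s t) k j := by
  have h0 := gBr_aux m r false s t i j k l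
  have h1 := gBr_aux m r true (!s) t i j k l
  have h2 := gX_add r m (xor s t) k j
  rw [← h2]
  have e : gBr (m + 1) r s t i j k l =
      (gS false m s i j * gX r t k l - (ss false t * ss s t) • (gX r t k l * gS false m s i j))
      + (-1 : ℂ) ^ m • (gS true m (!s) i j * gX r t k l
        - (ss true t * ss (!s) t) • (gX r t k l * gS true m (!s) i j)) := by
    rw [gBr, gX_succ]
    cases s <;> cases t <;>
      simp only [ss, cond_true, cond_false, Bool.and_false, Bool.and_true, Bool.true_and,
        Bool.false_and, Bool.not_true, Bool.not_false, add_mul, mul_add, smul_mul_assoc,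
        mul_smul_comm] <;> module
  rw [e, h0, h1, gL]
  rcases neg_one_pow_eq_or ℂ m with h | h <;> rcases neg_one_pow_eq_or ℂ r with h' | h' <;>
    cases t <;> cases s <;>
    simp only [ss, pw, pow_succ, pow_add, h, h', cond_true, cond_false, Bool.and_false,
      Bool.and_true, Bool.true_and, Bool.false_and,
        Bool.xor_false, Bool.xor_true, Bool.not_true, Bool.not_false] <;>
    module

theorem gL_add {n : ℕ} (m : ℕ) (i : Fin n) (Z W : Bool → Fin n → UQ n) (s : Bool) :
    gL m i (fun s a => Z s a + W s a) s = gL m i Z s + gL m i W s := by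
  simp only [gL, mul_add, Finset.sum_add_distrib]; module

theorem gL_sub {n : ℕ} (m : ℕ) (i : Fin n) (Z W : Bool → Fin n → UQ n) (s : Bool) :
    gL m i (fun s a => Z s a - W s a) s = gL m i Z s - gL m i W s := by
  simp only [gL, mul_sub, Finset.sum_sub_distrib]; module

theorem gL_mul {n : ℕ} (m p : ℕ) (i l : Fin n) (c : Bool → ℂ) (t : Bool) (W : Bool → UQ n)
    (s : Bool) :
    gL m i (fun s a => c s • (gX p t a l * W s)) s = c s • (gS false p t i l * W s)
      + ((-1 : ℂ) ^ m * c (!s)) • (gS true p t i l * W (!s)) := by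
  simp only [gL, gS, Finset.sum_mul, mul_smul_comm, ← Finset.smul_sum, mul_assoc]; module

/-- right-hand side of the quadratic relation -/
def gR {n : ℕ} (m r : ℕ) (t : Bool) (j k l : Fin n) (s : Bool) (i : Fin n) : UQ n :=
  (-ss s t) • (gX (m + 1) t i l * gX r s k j) - ss s t • (gX m t i l * gX (r + 1) s k j)
    + ss s t • (gX r t i l * gX (m + 1) s k j) + ss s t • (gX (r + 1) t i l * gX m s k j)
    + (ss s t * ss t true) • (gX (m + 1) (!t) i l * gX r (!s) k j)
    - (ss s t * ss t true) • (gX m (!t) i l * gX (r + 1) (!s) k j)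
    - (ss s t * ss t true * (-1) ^ (r + m + 1)) • (gX r (!t) i l * gX (m + 1) (!s) k j)
    + (ss s t * ss t true * (-1) ^ (r + m + 1)) • (gX (r + 1) (!t) i l * gX m (!s) k j)

theorem gL_gR {n : ℕ} (m' m r : ℕ) (t : Bool) (i j k l : Fin n) (s : Bool) :
    gL m' i (gR m r t j k l) s = 
      gL m' i (fun s a => (-ss s t) • (gX (m + 1) t a l * gX r s k j)) s
      - gL m' i (fun s a => ss s t • (gX m t a l * gX (r + 1) s k j)) s
    + gL m' i (fun s a => ss s t • (gX r t a l * gX (m + 1) s k j)) s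
    + gL m' i (fun s a => ss s t • (gX (r + 1) t a l * gX m s k j)) s
    + gL m' i (fun s a => (ss s t * ss t true) • (gX (m + 1) (!t) a l * gX r (!s) k j)) s
    - gL m' i (fun s a => (ss s t * ss t true) • (gX m (!t) a l * gX (r + 1) (!s) k j)) s
    - gL m' i (fun s a => (ss s t * ss t true * (-1) ^ (r + m + 1)) •
        (gX r (!t) a l * gX (m + 1) (!s) k j)) s
    + gL m' i (fun s a => (ss s t * ss t true * (-1) ^ (r + m + 1)) •
        (gX (r + 1) (!t) a l * gX m (!s) k j)) s := by
  simp only [← gL_add, ← gL_sub]; rfl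

theorem gX_one {n : ℕ} (s : Bool) (i j : Fin n) : gX 1 s i j = gG s i j := by
  rw [gX_succ]
  simp only [gS, gX_zero, pow_zero, one_smul, mul_smul_comm, mul_one]
  cases s <;> simp only [cond_true, cond_false, zero_smul, Finset.sum_const_zero, add_zero, zero_add,
    Bool.not_true, Bool.not_false, kd_sum]

theorem gBr_zero {n : ℕ} (r : ℕ) (s t : Bool) (i j k l : Fin n) :
    gBr 0 r s t i j k l = 0 := by
  rw [gBr, gX_zero]
  cases s <;> simp [ss]

theorem star0 {n : ℕ} (r : ℕ) (t : Bool) (j k l : Fin n) (s : Bool) (i : Fin n) :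
    gBr 2 r s t i j k l - gBr 0 (r + 2) s t i j k l = gR 0 r t j k l s i := by
  have e1 : (fun s a => gBr 1 r s t a j k l) = (fun s a => 
      (ss s t) • (gX r t a l * gX 0 s k j)
      + ((-1 : ℂ) ^ (0 + r + 1) * ss (!s) t) • (gX r (!t) a l * gX 0 (!s) k j)
      - (ss s t * pw t 0) • (gX 0 false a l * gX (r + 0) (xor s t) k j)) := by
    funext s a
    rw [gBr_succ]
    simp only [gBr_zero, gL, mul_zero, Finset.sum_const_zero, smul_zero, zero_add, mul_smul]
    congr 1
    simp only [gX_zero false a l, smul_mul_assoc, one_mul, cond_false]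
    rw [show kd l a = kd a l by simp [kd, eq_comm]]
  rw [gBr_zero, gBr_succ 1 r, e1, gL_sub, gL_add, gL_mul, gL_mul, gL_mul, gR]
  rw [gX_succ r t i l, gX_succ r (!t) i l, gX_succ 0 t i l, gX_succ 0 (!t) i l]
  have z1 : gS false 0 true i l = 0 := by simp [gS, gX_zero]
  have z2 : gS true 0 true i l = 0 := by simp [gS, gX_zero]
  simp only [Nat.add_zero, Nat.zero_add, pow_zero, one_smul]
  rw [gX_zero t i l, gX_zero (!t) i l]
  rw [show kd l i = kd i l by simp [kd, eq_comm]]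
  rcases neg_one_pow_eq_or ℂ r with h' | h' <;>
    cases t <;> cases s <;>
    simp only [ss, pw, pow_succ, pow_add, pow_zero, h', cond_true, cond_false, Bool.and_false,
      Bool.and_true, Bool.true_and, Bool.false_and, z1, z2, zero_mul, add_mul, smul_mul_assoc,
      one_mul, Bool.xor_false, Bool.xor_true, Bool.not_true, Bool.not_false] <;>
    module

theorem star {n : ℕ} (m r : ℕ) (t : Bool) (j k l : Fin n) (s : Bool) (i : Fin n) :
    gBr (m + 2) r s t i j k l - gBr m (r + 2) s t i j k l = gR m r t j k l s i := by
  induction m generalizing s i with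
  | zero => exact star0 r t j k l s i
  | succ m ih =>
    have hL : gL (m + 2) i (fun s a => gBr (m + 2) r s t a j k l) s
        - gL m i (fun s a => gBr m (r + 2) s t a j k l) s = gL m i (gR m r t j k l) s := by
      rw [show gL (m + 2) i (fun s a => gBr (m + 2) r s t a j k l) s
        = gL m i (fun s a => gBr (m + 2) r s t a j k l) s by simp [gL, pow_add], ← gL_sub]
      congr 1
      funext s a
      exact ih s a
    rw [show m + 1 + 2 = (m + 2) + 1 by ring, gBr_succ (m + 2) r, gBr_succ m (r + 2)]
    rw [show r + (m + 2) = r + 2 + m by ring]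
    rw [gL_gR] at hL
    simp only [gL_mul] at hL
    rw [sub_eq_iff_eq_add] at hL
    rw [hL, gR]
    rw [gX_succ (m + 1) t i l, gX_succ (m + 1) (!t) i l, gX_succ m t i l, gX_succ m (!t) i l,
      gX_succ (r + 1) t i l, gX_succ (r + 1) (!t) i l, gX_succ r t i l, gX_succ r (!t) i l]
    rcases neg_one_pow_eq_or ℂ m with h | h <;> rcases neg_one_pow_eq_or ℂ r with h' | h' <;>
      cases t <;> cases s <;>
      simp only [ss, pw, pow_succ, pow_add, h, h', cond_true, cond_false, Bool.and_false,
        Bool.and_true, Bool.true_and, Bool.false_and, add_mul, smul_mul_assoc,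
        Bool.xor_false, Bool.xor_true, Bool.not_true, Bool.not_false] <;>
      module



/-- block index with natural-number position -/
def bn {n l : ℕ} (h : l ∣ n) (hl : 0 < l) (p : Fin (n / l)) (a : ℕ) : Fin n :=
  bidx h p ⟨a % l, Nat.mod_lt a hl⟩

theorem bn_fin {n l : ℕ} (h : l ∣ n) (hl : 0 < l) (p : Fin (n / l)) (a : Fin l) :
    bidx h p a = bn h hl p a.val := by
  unfold bn; congr 1; ext; simp [Nat.mod_eq_of_lt a.isLt]

theorem bn_val {n l : ℕ} (h : l ∣ n) (hl : 0 < l) (p : Fin (n / l)) (a : ℕ) (ha : a < l) :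
    (bn h hl p a).val = l * p.val + a := by
  simp [bn, bidx, Nat.mod_eq_of_lt ha]

theorem bn_inj {n l : ℕ} (h : l ∣ n) (hl : 0 < l) (p q : Fin (n / l)) (a b : ℕ) (ha : a < l)
    (hb : b < l) : bn h hl p a = bn h hl q b ↔ p = q ∧ a = b := by
  constructor
  · intro e
    have e1 : l * p.val + a = l * q.val + b := by
      rw [← bn_val h hl p a ha, ← bn_val h hl q b hb, e]
    have e2 : (l * p.val + a) % l = (l * q.val + b) % l := by rw [e1]
    rw [Nat.mul_add_mod, Nat.mul_add_mod, Nat.mod_eq_of_lt ha, Nat.mod_eq_of_lt hb] at e2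
    subst e2
    have e3 : l * p.val = l * q.val := by omega
    exact ⟨Fin.ext (Nat.eq_of_mul_eq_mul_left hl e3), rfl⟩
  · rintro ⟨rfl, rfl⟩; rfl

theorem kd_bn {n l : ℕ} (h : l ∣ n) (hl : 0 < l) (p q : Fin (n / l)) (a b : ℕ) (ha : a < l)
    (hb : b < l) : kd (bn h hl p a) (bn h hl q b) = if p = q ∧ a = b then 1 else 0 := by
  simp only [kd, bn_inj h hl p q a b ha hb]

theorem bn_surj {n l : ℕ} (h : l ∣ n) (hl : 0 < l) (k : Fin n) :
    ∃ (p : Fin (n / l)) (a : ℕ), a < l ∧ bn h hl p a = k := by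
  have hk : k.val / l < n / l := by
    rw [Nat.div_lt_iff_lt_mul hl, Nat.div_mul_cancel h]; exact k.isLt
  refine ⟨⟨k.val / l, hk⟩, k.val % l, Nat.mod_lt _ hl, ?_⟩
  ext
  rw [bn_val h hl _ _ (Nat.mod_lt _ hl)]
  exact Nat.div_add_mod _ _

theorem sum_bn {n l : ℕ} (h : l ∣ n) (hl : 0 < l) (f : Fin n → UQ n) :
    ∑ k, f k = ∑ p : Fin (n / l), ∑ a ∈ Finset.range l, f (bn h hl p a) := by
  rw [← Finset.sum_product']
  symm
  refine Finset.sum_bij (fun x _ => bn h hl x.1 x.2) (fun _ _ => Finset.mem_univ _) ?_ ?_ ?_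
  · rintro ⟨p, a⟩ ha ⟨q, b⟩ hb e
    simp only [Finset.mem_product, Finset.mem_univ, Finset.mem_range, true_and] at ha hb
    obtain ⟨e1, e2⟩ := (bn_inj h hl p q a b ha hb).1 e
    simp [e1, e2]
  · intro k _
    obtain ⟨p, a, ha, e⟩ := bn_surj h hl k
    exact ⟨(p, a), by simp [ha], e⟩
  · intros; rfl

/-- the character, extended by zero -/
def chi {m : ℕ} (s : Bool) (p : Fin m) (a : ℕ) (q : Fin m) (b : ℕ) : ℂ :=
  if s = false ∧ a = b + 1 ∧ p = q then 1 else 0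

/-- shifted generators -/
def gH {n l : ℕ} (h : l ∣ n) (hl : 0 < l) (s : Bool) (p : Fin (n / l)) (a : ℕ)
    (q : Fin (n / l)) (b : ℕ) : UQ n :=
  gG s (bn h hl p a) (bn h hl q b) - chi s p a q b • (1 : UQ n)

theorem gG_eq {n l : ℕ} (h : l ∣ n) (hl : 0 < l) (s : Bool) (p : Fin (n / l)) (a : ℕ)
    (q : Fin (n / l)) (b : ℕ) : gG s (bn h hl p a) (bn h hl q b) =
    gH h hl s p a q b + chi s p a q b • (1 : UQ n) := by
  simp [gH]

/-- Kronecker delta for block positions -/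
def kb {m : ℕ} (p : Fin m) (a : ℕ) (q : Fin m) (b : ℕ) : ℂ := if p = q ∧ a = b then 1 else 0

/-- the constant appearing in the commutator of two shifted generators -/
def pr {m : ℕ} (s t : Bool) (p : Fin m) (a : ℕ) (q : Fin m) (b : ℕ)
    (r : Fin m) (c : ℕ) (u : Fin m) (d : ℕ) : ℂ :=
  kb q b r c * chi (xor s t) p a u d - ss s t * kb u d p a * chi (xor s t) r c q b

theorem gH_rel {n l : ℕ} (h : l ∣ n) (hl : 0 < l) (s t : Bool) (p q r u : Fin (n / l))
    (a b c d : ℕ) (ha : a < l) (hb : b < l) (hc : c < l) (hd : d < l) :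
    gH h hl s p a q b * gH h hl t r c u d = ss s t • (gH h hl t r c u d * gH h hl s p a q b)
      + pr s t p a q b r c u d • (1 : UQ n)
      + (kb q b r c • gH h hl (xor s t) p a u d
        - (ss s t * kb u d p a) • gH h hl (xor s t) r c q b) := by
  have e := gG_rel s t (bn h hl p a) (bn h hl q b) (bn h hl r c) (bn h hl u d)
  have k1 : kd (bn h hl q b) (bn h hl r c) = kb q b r c := kd_bn h hl _ _ _ _ hb hc
  have k2 : kd (bn h hl u d) (bn h hl p a) = kb u d p a := kd_bn h hl _ _ _ _ hd ha
  have cz : ∀ (p : Fin (n / l)) (a : ℕ) (q : Fin (n / l)) (b : ℕ), chi true p a q b = 0 := by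
    intros; simp [chi]
  rw [k1, k2] at e
  rw [show gH h hl s p a q b = gG s (bn h hl p a) (bn h hl q b) - chi s p a q b • (1 : UQ n) from rfl,
    show gH h hl t r c u d = gG t (bn h hl r c) (bn h hl u d) - chi t r c u d • (1 : UQ n) from rfl]
  rw [mul_sub, sub_mul, e]
  simp only [gG_eq h hl (xor s t), pr, sub_mul, mul_sub, mul_smul_comm, smul_mul_assoc, mul_one,
    one_mul]
  cases s <;> cases t <;> simp only [ss, Bool.xor_false, Bool.xor_true, Bool.not_false, Bool.not_true, Bool.and_true, Bool.and_false, cz] <;> simp <;> module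

theorem gH_mem_Ichi {n l : ℕ} (h : l ∣ n) (hl : 0 < l) (s : Bool) (p : Fin (n / l)) (a : ℕ)
    (q : Fin (n / l)) (b : ℕ) (hba : b < a) (ha : a < l) : gH h hl s p a q b ∈ Ichi n l h := by
  apply Submodule.subset_span
  refine ⟨p, q, ⟨a, ha⟩, ⟨b, hba.trans ha⟩, hba, ?_⟩
  rw [bn_fin h hl, bn_fin h hl]
  cases s
  · left
    simp [gH, gG, chi, Algebra.algebraMap_eq_smul_one]
  · right
    simp [gH, gG, chi]

/-- Descriptors of generators: parity, row block, row position, column block, column position. -/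
abbrev Dsc (m : ℕ) := Bool × Fin m × ℕ × Fin m × ℕ

/-- validity of a descriptor of an element of the parabolic -/
def Dsc.ok {m : ℕ} (l : ℕ) (d : Dsc m) : Prop := d.2.2.1 ≤ d.2.2.2.2 ∧ d.2.2.2.2 < l

/-- degree -/
def dg (a b : ℕ) : ℤ := 2 * ((b : ℤ) - a) + 1

/-- degree of a descriptor -/
def Dsc.deg {m : ℕ} (d : Dsc m) : ℤ := dg d.2.2.1 d.2.2.2.2

/-- the generator of a descriptor -/
def gHd {n l : ℕ} (h : l ∣ n) (hl : 0 < l) (d : Dsc (n / l)) : UQ n :=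
  gH h hl d.1 d.2.1 d.2.2.1 d.2.2.2.1 d.2.2.2.2

/-- the filtration (containing the left ideal) -/
def Fil {n l : ℕ} (h : l ∣ n) (hl : 0 < l) (e : ℤ) : Submodule ℂ (UQ n) :=
  Submodule.span ℂ ({x | x ∈ Ichi n l h} ∪ {x | ∃ L : List (Dsc (n / l)),
    (∀ d ∈ L, Dsc.ok l d) ∧ (L.map Dsc.deg).sum ≤ e ∧ x = (L.map (gHd h hl)).prod})

section
variable {n l : ℕ} (h : l ∣ n) (hl : 0 < l)

theorem Ichi_le_Fil (e : ℤ) {x : UQ n} (hx : x ∈ Ichi n l h) : x ∈ Fil h hl e :=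
  Submodule.subset_span (Or.inl hx)

theorem mono_mem_Fil (L : List (Dsc (n / l))) (hL : ∀ d ∈ L, Dsc.ok l d) :
    (L.map (gHd h hl)).prod ∈ Fil h hl (L.map Dsc.deg).sum :=
  Submodule.subset_span (Or.inr ⟨L, hL, le_refl _, rfl⟩)

theorem Fil_mono {e e' : ℤ} (he : e ≤ e') : Fil h hl e ≤ Fil h hl e' := by
  apply Submodule.span_mono
  rintro x (hx | ⟨L, hL, hd, rfl⟩)
  · exact Or.inl hx
  · exact Or.inr ⟨L, hL, hd.trans he, rfl⟩

/-- operator degree -/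
def OpDeg (u : UQ n) (δ : ℤ) : Prop := ∀ e v, v ∈ Fil h hl e → u * v ∈ Fil h hl (e + δ)

variable {h hl}

theorem OpDeg.mono {u : UQ n} {δ δ' : ℤ} (hu : OpDeg h hl u δ) (hd : δ ≤ δ') :
    OpDeg h hl u δ' := fun e v hv => Fil_mono h hl (by omega) (hu e v hv)

theorem OpDeg.add {u v : UQ n} {δ : ℤ} (hu : OpDeg h hl u δ) (hv : OpDeg h hl v δ) :
    OpDeg h hl (u + v) δ := fun e w hw => by
  rw [add_mul]; exact add_mem (hu e w hw) (hv e w hw)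

theorem OpDeg.sub {u v : UQ n} {δ : ℤ} (hu : OpDeg h hl u δ) (hv : OpDeg h hl v δ) :
    OpDeg h hl (u - v) δ := fun e w hw => by
  rw [sub_mul]; exact sub_mem (hu e w hw) (hv e w hw)

theorem OpDeg.smul {u : UQ n} {δ : ℤ} (c : ℂ) (hu : OpDeg h hl u δ) :
    OpDeg h hl (c • u) δ := fun e w hw => by
  rw [smul_mul_assoc]; exact Submodule.smul_mem _ _ (hu e w hw)

theorem OpDeg.mul {u v : UQ n} {δ δ' : ℤ} (hu : OpDeg h hl u δ) (hv : OpDeg h hl v δ') :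
    OpDeg h hl (u * v) (δ + δ') := fun e w hw => by
  rw [mul_assoc, show e + (δ + δ') = e + δ' + δ by ring]; exact hu _ _ (hv e w hw)

theorem OpDeg.zero (δ : ℤ) : OpDeg h hl 0 δ := fun e w hw => by
  rw [zero_mul]; exact zero_mem _

theorem OpDeg.sum {ι : Type*} (S : Finset ι) (f : ι → UQ n) {δ : ℤ}
    (hf : ∀ i ∈ S, OpDeg h hl (f i) δ) : OpDeg h hl (∑ i ∈ S, f i) δ := fun e w hw => by
  rw [Finset.sum_mul]; exact sum_mem fun i hi => hf i hi e w hw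

theorem opDeg_of_mono {u : UQ n} {δ : ℤ}
    (H : ∀ L : List (Dsc (n / l)), (∀ d ∈ L, Dsc.ok l d) →
      u * (L.map (gHd h hl)).prod ∈ Fil h hl ((L.map Dsc.deg).sum + δ)) : OpDeg h hl u δ := by
  intro e v hv
  have hle : Fil h hl e ≤ (Fil h hl (e + δ)).comap (LinearMap.mulLeft ℂ u) := by
    apply Submodule.span_le.2
    rintro x (hx | ⟨L, hL, hd, rfl⟩)
    · exact Ichi_le_Fil h hl _ ((Ichi n l h).smul_mem u hx)
    · exact Fil_mono h hl (by omega) (H L hL)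
  exact hle hv

theorem opDeg_p (d : Dsc (n / l)) (hd : d.ok l) : OpDeg h hl (gHd h hl d) d.deg := by
  apply opDeg_of_mono
  intro L hL
  have := mono_mem_Fil h hl (d :: L) (by
    intro d' hd'
    rcases List.mem_cons.1 hd' with rfl | h'
    · exact hd
    · exact hL _ h')
  simpa [add_comm] using this

theorem gH_mono (L : List (Dsc (n / l))) : (∀ d ∈ L, Dsc.ok l d) →
    ∀ (s : Bool) (p : Fin (n / l)) (a : ℕ) (q : Fin (n / l)) (b : ℕ), a < l → b < l →
    gH h hl s p a q b * (L.map (gHd h hl)).prod ∈ Fil h hl ((L.map Dsc.deg).sum + dg a b) := by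
  induction L with
  | nil =>
    intro _ s p a q b ha hb
    rcases le_or_gt a b with hab | hab
    · exact opDeg_p (h := h) (hl := hl) (s, p, a, q, b) ⟨hab, hb⟩ _ _ (mono_mem_Fil h hl [] (by simp))
    · simp only [List.map_nil, List.prod_nil, mul_one]
      exact Ichi_le_Fil h hl _ (gH_mem_Ichi h hl s p a q b hab ha)
  | cons x L ih =>
    intro hL s p a q b ha hb
    obtain ⟨t, r, c, u, d⟩ := x
    have hx : Dsc.ok l (t, r, c, u, d) := hL _ List.mem_cons_self
    have hL' : ∀ d ∈ L, Dsc.ok l d := fun d hd => hL d (List.mem_cons_of_mem _ hd)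
    have hcd : c ≤ d := hx.1
    have hd : d < l := hx.2
    have hc : c < l := by omega
    have hM := mono_mem_Fil h hl L hL'
    have ih' := ih hL'
    rw [List.map_cons, List.map_cons, List.prod_cons, List.sum_cons, ← mul_assoc]
    rw [show gHd h hl (t, r, c, u, d) = gH h hl t r c u d from rfl, gH_rel h hl s t p q r u a b c d ha hb hc hd]
    rw [add_mul, add_mul, sub_mul]
    simp only [smul_mul_assoc, one_mul, mul_assoc]
    have hdeg : Dsc.deg (t, r, c, u, d) = dg c d := rfl
    rw [hdeg]
    refine add_mem (add_mem ?_ ?_) (sub_mem ?_ ?_)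
    · apply Submodule.smul_mem
      have := opDeg_p (h := h) (hl := hl) (t, r, c, u, d) hx _ _ (ih' s p a q b ha hb)
      rw [hdeg] at this
      exact Fil_mono h hl (by omega) this
    · unfold pr
      rw [show ∀ (x y : ℂ) (M : UQ n), (x - y) • M = x • M - y • M from fun x y M => by module]
      refine sub_mem ?_ ?_
      · by_cases hh : (q = r ∧ b = c) ∧ (a = d + 1)
        · apply Submodule.smul_mem
          exact Fil_mono h hl (by simp only [dg]; push_cast [hh.1.2, hh.2]; omega) hM
        · have : kb q b r c * chi (xor s t) p a u d = 0 := by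
            simp only [kb, chi]; split_ifs <;> simp_all
          rw [this, zero_smul]; exact zero_mem _
      · by_cases hh : (u = p ∧ d = a) ∧ (c = b + 1)
        · apply Submodule.smul_mem
          exact Fil_mono h hl (by simp only [dg]; push_cast [hh.1.2, hh.2]; omega) hM
        · have : ss s t * kb u d p a * chi (xor s t) r c q b = 0 := by
            simp only [kb, chi]; split_ifs <;> simp_all
          rw [this, zero_smul]; exact zero_mem _
    · by_cases hh : q = r ∧ b = c
      · apply Submodule.smul_mem
        exact Fil_mono h hl (by simp only [dg]; rw [hh.2]; omega) (ih' (xor s t) p a u d ha hd)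
      · rw [kb, if_neg hh, zero_smul]; exact zero_mem _
    · by_cases hh : u = p ∧ d = a
      · apply Submodule.smul_mem
        exact Fil_mono h hl (by simp only [dg]; rw [hh.2]; omega) (ih' (xor s t) r c q b hc hb)
      · rw [kb, if_neg hh, mul_zero, zero_smul]; exact zero_mem _

theorem opDeg_gH (s : Bool) (p : Fin (n / l)) (a : ℕ) (q : Fin (n / l)) (b : ℕ) (ha : a < l)
    (hb : b < l) : OpDeg h hl (gH h hl s p a q b) (dg a b) :=
  opDeg_of_mono fun L hL => gH_mono L hL s p a q b ha hb

theorem one_mem_Fil : (1 : UQ n) ∈ Fil h hl 0 := by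
  simpa using mono_mem_Fil h hl [] (by simp)

theorem OpDeg.mem {u : UQ n} {δ : ℤ} (hu : OpDeg h hl u δ) : u ∈ Fil h hl δ := by
  simpa using hu 0 1 one_mem_Fil

theorem opDeg_one : OpDeg h hl 1 0 := fun e v hv => by simpa using hv

/-- The commutator of two shifted generators minus its constant has low degree. -/
theorem opDeg_comm (s t : Bool) (p q r u : Fin (n / l))
    (a b c d : ℕ) (ha : a < l) (hb : b < l) (hc : c < l) (hd : d < l) :
    OpDeg h hl (gH h hl s p a q b * gH h hl t r c u d
      - ss s t • (gH h hl t r c u d * gH h hl s p a q b)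
      - pr s t p a q b r c u d • (1 : UQ n)) (dg a b + dg c d - 1) := by
  rw [gH_rel h hl s t p q r u a b c d ha hb hc hd]
  rw [show ∀ x y z : UQ n, x + y + z - x - y = z by intros; abel]
  refine OpDeg.sub ?_ ?_
  · by_cases hh : q = r ∧ b = c
    · exact (OpDeg.smul _ (opDeg_gH _ p a u d ha hd)).mono (by simp only [dg]; rw [hh.2]; omega)
    · rw [kb, if_neg hh, zero_smul]; exact OpDeg.zero _
  · by_cases hh : u = p ∧ d = a
    · exact (OpDeg.smul _ (opDeg_gH _ r c q b hc hb)).mono (by simp only [dg]; rw [hh.2]; omega)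
    · rw [kb, if_neg hh, mul_zero, zero_smul]; exact OpDeg.zero _

theorem dg_pos (d : Dsc (n / l)) (hd : d.ok l) : 1 ≤ d.deg := by
  have := hd.1
  simp only [Dsc.deg, dg]; omega

theorem len_le_deg (L : List (Dsc (n / l))) (hL : ∀ d ∈ L, Dsc.ok l d) :
    (L.length : ℤ) ≤ (L.map Dsc.deg).sum := by
  induction L with
  | nil => simp
  | cons x L ih =>
    have h1 := dg_pos x (hL _ List.mem_cons_self)
    have h2 := ih (fun d hd => hL d (List.mem_cons_of_mem _ hd))
    simp only [List.length_cons, List.map_cons, List.sum_cons]; push_cast; omega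

theorem Fil_neg {e : ℤ} (he : e < 0) {x : UQ n} (hx : x ∈ Fil h hl e) : x ∈ Ichi n l h := by
  have : Fil h hl e ≤ (Ichi n l h).restrictScalars ℂ := by
    apply Submodule.span_le.2
    rintro x (hx | ⟨L, hL, hd, rfl⟩)
    · exact hx
    · have := len_le_deg L hL
      omega
  exact this hx

theorem uq_induction {n : ℕ} (P : UQ n → Prop) (hc : ∀ c : ℂ, P (algebraMap ℂ _ c))
    (hg : ∀ s i j, P (gG s i j)) (ha : ∀ x y, P x → P y → P (x + y))
    (hm : ∀ x y, P x → P y → P (x * y)) (u : UQ n) : P u := by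
  obtain ⟨x, rfl⟩ := RingQuot.mkAlgHom_surjective ℂ (QRel n) u
  induction x using FreeAlgebra.induction with
  | grade0 r => rw [AlgHom.commutes]; exact hc r
  | grade1 x =>
    cases x with
    | E i j => exact hg false i j
    | F i j => exact hg true i j
  | mul a b ha' hb' => rw [map_mul]; exact hm _ _ ha' hb'
  | add a b ha' hb' => rw [map_add]; exact ha _ _ ha' hb'

variable (h hl)
theorem exists_Fil (u : UQ n) : ∃ e : ℕ, u ∈ Fil h hl e := by
  have key : ∀ u : UQ n, ∃ δ : ℕ, OpDeg h hl u δ := by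
    apply uq_induction
    · intro c
      rw [Algebra.algebraMap_eq_smul_one]
      exact ⟨0, OpDeg.smul _ opDeg_one⟩
    · intro s i j
      obtain ⟨p, a, ha, rfl⟩ := bn_surj h hl i
      obtain ⟨q, b, hb, rfl⟩ := bn_surj h hl j
      refine ⟨(dg a b).toNat, ?_⟩
      rw [gG_eq]
      exact ((opDeg_gH s p a q b ha hb).mono (by omega)).add
        (OpDeg.smul _ (opDeg_one.mono (by omega)))
    · rintro x y ⟨d, hd⟩ ⟨d', hd'⟩
      exact ⟨d + d', (hd.mono (by omega)).add (hd'.mono (by omega))⟩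
    · rintro x y ⟨d, hd⟩ ⟨d', hd'⟩
      exact ⟨d + d', by push_cast; exact hd.mul hd'⟩
  obtain ⟨δ, hδ⟩ := key u
  exact ⟨δ, hδ.mem⟩
end



/-- refined elements -/
def mn {n l : ℕ} (h : l ∣ n) (hl : 0 < l) : ℕ → Bool → Fin (n / l) → ℕ → Fin (n / l) → UQ n
  | 0, s, p, a, q => if s = false ∧ a = 0 ∧ p = q then 1 else 0
  | m + 1, s, p, a, q => (if 1 ≤ a then mn h hl m s p (a - 1) q else 0) +
      (if a ≤ m ∧ m < l then pw s m • gH h hl s p a q m else 0)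

section
variable {n l : ℕ} {h : l ∣ n} {hl : 0 < l}

theorem mn_lt (m : ℕ) : ∀ (s : Bool) (p : Fin (n / l)) (a : ℕ) (q : Fin (n / l)), m < a →
    mn h hl m s p a q = 0 := by
  induction m with
  | zero => intro s p a q ha; rw [mn, if_neg (by omega)]
  | succ m ih =>
    intro s p a q ha
    rw [mn, if_pos (by omega), if_neg (by omega), ih _ _ _ _ (by omega), add_zero]

theorem mn_eq (m : ℕ) (s : Bool) (p q : Fin (n / l)) :
    mn h hl m s p m q = if s = false ∧ p = q then 1 else 0 := by
  induction m with
  | zero => simp [mn]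
  | succ m ih =>
    rw [mn, if_pos (by omega), if_neg (by omega), add_zero]; exact ih

theorem opDeg_mn (m : ℕ) : ∀ (s : Bool) (p : Fin (n / l)) (a : ℕ) (q : Fin (n / l)), a < m → a < l →
    OpDeg h hl (mn h hl m s p a q) (2 * ((m : ℤ) - a) - 1) := by
  induction m with
  | zero => intro s p a q ha; omega
  | succ m ih =>
    intro s p a q ha hal
    rw [mn]
    refine OpDeg.add ?_ ?_
    · split_ifs with h1
      · exact (ih s p (a - 1) q (by omega) (by omega)).mono (by push_cast [h1]; omega)
      · exact OpDeg.zero _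
    · split_ifs with h1
      · exact OpDeg.smul _ ((opDeg_gH s p a q m hal h1.2).mono (by simp only [dg]; push_cast; omega))
      · exact OpDeg.zero _

/-- leading part of one summand -/
theorem lead_term (m : ℕ) (u s : Bool) (p r q : Fin (n / l)) (a c : ℕ) (ha : a < l) (hc : c < l)
    (ih : gX m s (bn h hl r c) (bn h hl q 0) - mn h hl m s r c q ∈ Fil h hl (2 * ((m : ℤ) - c) - 2)) :
    gH h hl u p a r c * gX m s (bn h hl r c) (bn h hl q 0)
      - (if c = m then (if s = false ∧ r = q then gH h hl u p a r c else 0) else 0)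
      ∈ Fil h hl (2 * ((m : ℤ) - a)) := by
  have hop := opDeg_gH (h := h) (hl := hl) u p a r c ha hc
  have h1 := hop _ _ ih
  rw [mul_sub (gH h hl u p a r c)] at h1
  have h2 : gH h hl u p a r c * mn h hl m s r c q
      - (if c = m then (if s = false ∧ r = q then gH h hl u p a r c else 0) else 0)
      ∈ Fil h hl (2 * ((m : ℤ) - a)) := by
    rcases lt_trichotomy m c with hmc | hmc | hmc
    · rw [mn_lt _ _ _ _ _ hmc, if_neg (by omega)]; simp
    · subst hmc
      rw [mn_eq, if_pos rfl]
      split_ifs <;> simp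
    · rw [if_neg (by omega), sub_zero]
      have := hop _ _ (opDeg_mn (h := h) (hl := hl) m s r c q hmc hc).mem
      exact Fil_mono h hl (by simp only [dg]; omega) this
  have h3 := add_mem (Fil_mono h hl (show _ ≤ 2 * ((m : ℤ) - a) by simp only [dg]; omega) h1) h2
  rwa [sub_add_sub_cancel] at h3

theorem chi_sum (s : Bool) (p : Fin (n / l)) (a : ℕ) (ha : a < l) (f : Fin (n / l) → ℕ → UQ n) :
    ∑ r : Fin (n / l), ∑ c ∈ Finset.range l, chi s p a r c • f r c =
      if s = false ∧ 1 ≤ a then f p (a - 1) else 0 := by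
  split_ifs with hh
  · rw [Finset.sum_eq_single p, Finset.sum_eq_single (a - 1)]
    · rw [chi, if_pos ⟨hh.1, by omega, rfl⟩, one_smul]
    · intro c _ hc
      rw [chi, if_neg (by omega), zero_smul]
    · intro h2; exact absurd (Finset.mem_range.2 (by omega)) h2
    · intro r _ hr
      apply Finset.sum_eq_zero
      intro c _
      rw [chi, if_neg (by tauto), zero_smul]
    · simp
  · apply Finset.sum_eq_zero
    intro r _
    apply Finset.sum_eq_zero
    intro c _
    rw [chi, if_neg, zero_smul]
    rintro ⟨h1, h2, _⟩
    exact hh ⟨h1, by omega⟩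

theorem lead_sum (m : ℕ) (u s : Bool) (p q : Fin (n / l)) (a : ℕ) (ha : a < l)
    (ih : ∀ r c, c < l → gX m s (bn h hl r c) (bn h hl q 0) - mn h hl m s r c q ∈
      Fil h hl (2 * ((m : ℤ) - c) - 2)) :
    gS u m s (bn h hl p a) (bn h hl q 0)
      - (if u = false ∧ 1 ≤ a then gX m s (bn h hl p (a - 1)) (bn h hl q 0) else 0)
      - (if s = false ∧ a ≤ m ∧ m < l then gH h hl u p a q m else 0)
      ∈ Fil h hl (2 * ((m : ℤ) - a)) := by
  have e1 : gS u m s (bn h hl p a) (bn h hl q 0)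
      - (if u = false ∧ 1 ≤ a then gX m s (bn h hl p (a - 1)) (bn h hl q 0) else 0) =
      ∑ r : Fin (n / l), ∑ c ∈ Finset.range l,
        gH h hl u p a r c * gX m s (bn h hl r c) (bn h hl q 0) := by
    rw [gS, sum_bn h hl, ← chi_sum u p a ha (fun r c => gX m s (bn h hl r c) (bn h hl q 0)),
      ← Finset.sum_sub_distrib]
    refine Finset.sum_congr rfl fun r _ => ?_
    rw [← Finset.sum_sub_distrib]
    refine Finset.sum_congr rfl fun c _ => ?_
    rw [gG_eq, add_mul, smul_mul_assoc, one_mul, add_sub_cancel_right]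
  have e2 : (if s = false ∧ m < l then gH h hl u p a q m else 0) =
      ∑ r : Fin (n / l), ∑ c ∈ Finset.range l,
        (if c = m then (if s = false ∧ r = q then gH h hl u p a r c else 0) else 0) := by
    simp only [Finset.sum_ite_eq', Finset.mem_range]
    by_cases hs : s = false <;> by_cases hm : m < l <;> simp [hs, hm]
  have e3 : gS u m s (bn h hl p a) (bn h hl q 0)
      - (if u = false ∧ 1 ≤ a then gX m s (bn h hl p (a - 1)) (bn h hl q 0) else 0)
      - (if s = false ∧ m < l then gH h hl u p a q m else 0)
      ∈ Fil h hl (2 * ((m : ℤ) - a)) := by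
    rw [e1, e2, ← Finset.sum_sub_distrib]
    refine sum_mem fun r _ => ?_
    rw [← Finset.sum_sub_distrib]
    refine sum_mem fun c hc => ?_
    have hc := Finset.mem_range.1 hc
    exact lead_term m u s p r q a c ha hc (ih r c hc)
  by_cases ham : a ≤ m
  · simpa [ham] using e3
  · rw [if_neg (by tauto : ¬ (s = false ∧ a ≤ m ∧ m < l)), sub_zero]
    have := add_mem e3 (show (if s = false ∧ m < l then gH h hl u p a q m else 0) ∈
      Fil h hl (2 * ((m : ℤ) - a)) by
        split_ifs
        · exact Ichi_le_Fil h hl _ (gH_mem_Ichi h hl u p a q m (by omega) ha)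
        · exact zero_mem _)
    rwa [sub_add_cancel] at this

theorem lead (m : ℕ) : ∀ (s : Bool) (p : Fin (n / l)) (a : ℕ) (q : Fin (n / l)), a < l →
    gX m s (bn h hl p a) (bn h hl q 0) - mn h hl m s p a q ∈ Fil h hl (2 * ((m : ℤ) - a) - 2) := by
  induction m with
  | zero =>
    intro s p a q ha
    have : gX 0 s (bn h hl p a) (bn h hl q 0) = mn h hl 0 s p a q := by
      rw [mn]
      cases s
      · simp only [gX, eU, efU, cond_false]
        rw [kd_bn h hl p q a 0 ha hl]
        by_cases h1 : p = q <;> by_cases h2 : a = 0 <;> simp [h1, h2]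
      · simp [gX, fU, efU]
    rw [this, sub_self]; exact zero_mem _
  | succ m ih =>
    intro s p a q ha
    have h1 := lead_sum (h := h) (hl := hl) m false s p q a ha (fun r c hc => ih s r c q hc)
    have h2 := lead_sum (h := h) (hl := hl) m true (!s) p q a ha (fun r c hc => ih (!s) r c q hc)
    have h3 : (if 1 ≤ a then gX m s (bn h hl p (a - 1)) (bn h hl q 0) - mn h hl m s p (a - 1) q
        else 0) ∈ Fil h hl (2 * ((m : ℤ) - a)) := by
      split_ifs with h1a
      · exact Fil_mono h hl (by push_cast [h1a]; omega) (ih s p (a - 1) q (by omega))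
      · exact zero_mem _
    have h4 := add_mem (add_mem h1 (Submodule.smul_mem _ ((-1 : ℂ) ^ m) h2)) h3
    refine Fil_mono h hl (show _ ≤ _ from ?_) (?_ : _ ∈ Fil h hl (2 * ((m : ℤ) - a)))
    · push_cast; omega
    convert h4 using 1
    rw [gX_succ, mn]
    by_cases h1a : 1 ≤ a <;> by_cases h2a : a ≤ m ∧ m < l <;> cases s <;>
      simp [h1a, h2a, pw] <;> module

theorem X_unit (s : Bool) (p q : Fin (n / l)) :
    gX (l - 1) s (bn h hl p (l - 1)) (bn h hl q 0) - (if s = false ∧ p = q then 1 else 0)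
      ∈ Ichi n l h := by
  have := lead (h := h) (hl := hl) (l - 1) s p (l - 1) q (by omega)
  rw [mn_eq] at this
  exact Fil_neg (by omega) this

theorem mn_big (r : ℕ) : ∀ (s : Bool) (p : Fin (n / l)) (a : ℕ) (q : Fin (n / l)), r ≤ a →
    mn h hl (l + r) s p a q = mn h hl l s p (a - r) q := by
  induction r with
  | zero => intros; rfl
  | succ r ih =>
    intro s p a q ha
    rw [← add_assoc, mn, if_pos (by omega), if_neg (by omega), add_zero, ih _ _ _ _ (by omega)]
    congr 1; omega

theorem X_lead (r : ℕ) (hr : r < l) (s : Bool) (p q : Fin (n / l)) :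
    gX (l + r) s (bn h hl p (l - 1)) (bn h hl q 0) - mn h hl l s p (l - 1 - r) q
      ∈ Fil h hl (2 * r) := by
  have := lead (h := h) (hl := hl) (l + r) s p (l - 1) q (by omega)
  rw [mn_big _ _ _ _ _ (by omega)] at this
  exact Fil_mono h hl (by push_cast [show 1 ≤ l from hl]; omega) this
end



/-- refined generators of the parabolic -/
def Zr {n l : ℕ} (h : l ∣ n) (hl : 0 < l) (s : Bool) (p : Fin (n / l)) (i : ℕ) (q : Fin (n / l))
    (c : ℕ) : UQ n := mn h hl (c + 1) s p i q

/-- super commutator minus a constant -/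
def sc {n : ℕ} (s t : Bool) (x y : UQ n) (k : ℂ) : UQ n := x * y - ss s t • (y * x) - k • (1 : UQ n)

section
variable {n l : ℕ} {h : l ∣ n} {hl : 0 < l}

theorem Zr_rec (s : Bool) (p : Fin (n / l)) (i : ℕ) (q : Fin (n / l)) (c : ℕ) (hic : i ≤ c)
    (hc : c < l) : Zr h hl s p i q c =
    (if 1 ≤ i then Zr h hl s p (i - 1) q (c - 1) else 0) + pw s c • gH h hl s p i q c := by
  have h0 : i ≤ c ∧ c < l := ⟨hic, hc⟩
  rw [Zr, mn]
  simp only [h0, and_self, if_true]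
  congr 1
  split_ifs with h1
  · rw [Zr, show c - 1 + 1 = c by omega]
  · rfl

theorem opDeg_Zr (s : Bool) (p : Fin (n / l)) (i : ℕ) (q : Fin (n / l)) (c : ℕ) (hic : i ≤ c)
    (hc : c < l) : OpDeg h hl (Zr h hl s p i q c) (dg i c) :=
  (opDeg_mn (h := h) (hl := hl) (c + 1) s p i q (by omega) (by omega)).mono
    (by simp only [dg]; push_cast; omega)

theorem sc_right (s t : Bool) (x y z : UQ n) (k k' w : ℂ) {δ : ℤ} (h1 : OpDeg h hl (sc s t x y k) δ)
    (h2 : OpDeg h hl (sc s t x z k') δ) : OpDeg h hl (sc s t x (y + w • z) (k + w * k')) δ := by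
  have := h1.add (h2.smul w)
  convert this using 1
  simp only [sc, mul_add, add_mul, smul_mul_assoc, mul_smul_comm]
  module

theorem sc_left (s t : Bool) (x y z : UQ n) (k k' w : ℂ) {δ : ℤ} (h1 : OpDeg h hl (sc s t y x k) δ)
    (h2 : OpDeg h hl (sc s t z x k') δ) : OpDeg h hl (sc s t (y + w • z) x (k + w * k')) δ := by
  have := h1.add (h2.smul w)
  convert this using 1
  simp only [sc, mul_add, add_mul, smul_mul_assoc, mul_smul_comm]
  module

theorem sc_cast {s t : Bool} {x y : UQ n} {k k' : ℂ} {δ : ℤ} (h1 : OpDeg h hl (sc s t x y k) δ)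
    (e : k' = k) : OpDeg h hl (sc s t x y k') δ := e ▸ h1

theorem sc_zero_right (s t : Bool) (x : UQ n) (δ : ℤ) : OpDeg h hl (sc s t x 0 0) δ := by
  simpa [sc] using OpDeg.zero δ

theorem sc_zero_left (s t : Bool) (x : UQ n) (δ : ℤ) : OpDeg h hl (sc s t 0 x 0) δ := by
  simpa [sc] using OpDeg.zero δ

theorem am_const {m : ℕ} (s t : Bool) (p q r u : Fin m) (I C i c : ℕ) (hIC : I ≤ C) :
    (if (s, p, I, q, C) = (t, r, i + 1, u, c + 1) then pw t (c + 1) else 0) =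
    (if (s, p, I, q, C) = (t, r, i, u, c + 1 - 1) then pw t (c + 1 - 1) else 0) +
      pw t (c + 1) * pr s t q (C + 1) p I r (i + 1) u (c + 1) := by
  simp only [pr, kb, chi, Prod.mk.injEq, Nat.add_sub_cancel]
  by_cases hst : s = t
  · subst hst
    by_cases h1 : p = r
    · by_cases h2 : q = u
      · subst h1
        subst h2
        by_cases h3 : I = i
        · subst h3
          by_cases h4 : C = c
          · subst h4
            cases s <;> simp [pw, ss, pow_succ]
          · have : ¬ (c = C) := fun h => h4 h.symm
            simp [h4, this]
        · by_cases h5 : I = i + 1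
          · subst h5
            by_cases h4 : C = c + 1
            · subst h4; simp
            · have : ¬ (i + 1 = i) := by omega
              have h6 : ¬ (i = i + 1) := by omega
              have h7 : ¬ (c + 1 = C) := by omega
              simp [h4, this, h6, h7]
          · have : ¬ (i = I) := fun h => h3 h.symm
            simp [h3, h5, this]
      · have : ¬ (u = q) := fun h => h2 h.symm
        simp [h2, this]
    · have : ¬ (r = p) := fun h => h1 h.symm
      simp [h1, this]
  · have : xor s t = true := by cases s <;> cases t <;> simp_all
    simp [hst, this]

theorem am_Zr (s t : Bool) (p q r u : Fin (n / l)) (I C : ℕ) (hIC : I ≤ C) (hC : C + 1 < l)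
    (i : ℕ) : ∀ c, i ≤ c → c < l →
    OpDeg h hl (sc s t (gH h hl s q (C + 1) p I) (Zr h hl t r i u c)
      (if (s, p, I, q, C) = (t, r, i, u, c) then pw t c else 0)) (dg (C + 1) I + dg i c - 1) := by
  induction i with
  | zero =>
    intro c hic hc
    rw [Zr_rec t r 0 u c hic hc, if_neg (by omega)]
    have h1 := opDeg_comm (h := h) (hl := hl) s t q p r u (C + 1) I 0 c hC (by omega) (by omega) hc
    have h2 := sc_right s t (gH h hl s q (C + 1) p I) 0 _ 0 _ (pw t c) (sc_zero_right s t _ _) h1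
    refine sc_cast h2 ?_
    simp only [pr, kb, chi, ss, Prod.mk.injEq]
    by_cases hst : s = t
    · subst hst
      by_cases h1 : p = r <;> by_cases h2 : q = u <;> by_cases h3 : I = 0 <;> by_cases h4 : C = c <;>
        simp [*]
    · have : xor s t = true := by cases s <;> cases t <;> simp_all
      simp [hst, this]
  | succ i ih =>
    intro c hic hc
    rw [Zr_rec t r (i + 1) u c hic hc, if_pos (by omega)]
    have h1 := opDeg_comm (h := h) (hl := hl) s t q p r u (C + 1) I (i + 1) c hC (by omega)
      (by omega) hc
    have h0 := ih (c - 1) (by omega) (by omega)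
    rw [show dg (C + 1) I + dg i (c - 1) - 1 = dg (C + 1) I + dg (i + 1) c - 1 by
      simp only [dg]; push_cast [show 1 ≤ c by omega]; ring] at h0
    have h2 := sc_right s t (gH h hl s q (C + 1) p I) _ _ _ _ (pw t c) h0 h1
    refine sc_cast h2 ?_
    obtain ⟨c, rfl⟩ : ∃ c', c = c' + 1 := ⟨c - 1, by omega⟩
    exact am_const s t p q r u I C i c hIC

theorem pr_pp (s t : Bool) (p q r u : Fin (n / l)) (a b c d : ℕ) (hab : a ≤ b) (hcd : c ≤ d) :
    pr s t p a q b r c u d = 0 := by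
  simp only [pr, kb, chi]
  by_cases h1 : b = c
  · have : ¬ (a = d + 1) := by omega
    by_cases h2 : d = a
    · have h3 : ¬ (c = b + 1) := by omega
      simp [this, h3]
    · simp [this, h2]
  · by_cases h2 : d = a
    · have h3 : ¬ (c = b + 1) := by omega
      simp [h1, h3]
    · simp [h1, h2]

theorem gH_Zr (s t : Bool) (p q r u : Fin (n / l)) (a b : ℕ) (hab : a ≤ b) (hb : b < l)
    (i : ℕ) : ∀ c, i ≤ c → c < l →
    OpDeg h hl (sc s t (gH h hl s p a q b) (Zr h hl t r i u c) 0) (dg a b + dg i c - 1) := by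
  induction i with
  | zero =>
    intro c hic hc
    rw [Zr_rec t r 0 u c hic hc, if_neg (by omega)]
    have h1 := opDeg_comm (h := h) (hl := hl) s t p q r u a b 0 c (by omega) hb (by omega) hc
    have h2 := sc_right s t (gH h hl s p a q b) 0 _ 0 _ (pw t c) (sc_zero_right s t _ _) h1
    refine sc_cast h2 ?_
    simp [pr_pp s t p q r u a b 0 c hab hic]
  | succ i ih =>
    intro c hic hc
    rw [Zr_rec t r (i + 1) u c hic hc, if_pos (by omega)]
    have h1 := opDeg_comm (h := h) (hl := hl) s t p q r u a b (i + 1) c (by omega) hb (by omega) hc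
    have h0 := ih (c - 1) (by omega) (by omega)
    rw [show dg a b + dg i (c - 1) - 1 = dg a b + dg (i + 1) c - 1 by
      simp only [dg]; push_cast [show 1 ≤ c by omega]; ring] at h0
    have h2 := sc_right s t (gH h hl s p a q b) _ _ _ _ (pw t c) h0 h1
    refine sc_cast h2 ?_
    simp [pr_pp s t p q r u a b (i + 1) c hab hic]

theorem Zr_Zr (s t : Bool) (p q r u : Fin (n / l)) (i c : ℕ) (hic : i ≤ c) (hc : c < l) (a : ℕ) :
    ∀ b, a ≤ b → b < l →
    OpDeg h hl (sc s t (Zr h hl s p a q b) (Zr h hl t r i u c) 0) (dg a b + dg i c - 1) := by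
  induction a with
  | zero =>
    intro b hab hb
    rw [Zr_rec s p 0 q b hab hb, if_neg (by omega)]
    have h1 := gH_Zr (h := h) (hl := hl) s t p q r u 0 b hab hb i c hic hc
    have h2 := sc_left s t (Zr h hl t r i u c) 0 _ 0 _ (pw s b) (sc_zero_left s t _ _) h1
    refine sc_cast h2 ?_
    simp
  | succ a ih =>
    intro b hab hb
    rw [Zr_rec s p (a + 1) q b hab hb, if_pos (by omega)]
    have h1 := gH_Zr (h := h) (hl := hl) s t p q r u (a + 1) b hab hb i c hic hc
    have h0 := ih (b - 1) (by omega) (by omega)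
    rw [show dg a (b - 1) + dg i c - 1 = dg (a + 1) b + dg i c - 1 by
      simp only [dg]; push_cast [show 1 ≤ b by omega]; ring] at h0
    have h2 := sc_left s t (Zr h hl t r i u c) _ _ _ _ (pw s b) h0 h1
    refine sc_cast h2 ?_
    simp

variable (h hl)
/-- refined generator of a descriptor -/
def zd (d : Dsc (n / l)) : UQ n := Zr h hl d.1 d.2.1 d.2.2.1 d.2.2.2.1 d.2.2.2.2

/-- one summand of the Euler operator -/
def eT (d : Dsc (n / l)) : UQ n :=
  pw d.1 d.2.2.2.2 • (zd h hl d * gH h hl d.1 d.2.2.2.1 (d.2.2.2.2 + 1) d.2.1 d.2.2.1)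

/-- index set of the Euler operator -/
def eS (n l : ℕ) : Finset (Dsc (n / l)) :=
  (Finset.univ ×ˢ Finset.univ ×ˢ Finset.range l ×ˢ Finset.univ ×ˢ Finset.range l).filter
    fun d => d.2.2.1 ≤ d.2.2.2.2 ∧ d.2.2.2.2 + 1 < l

/-- the Euler operator -/
def Eu : UQ n := ∑ d ∈ eS n l, eT h hl d
variable {h hl}

theorem mem_eS (d : Dsc (n / l)) : d ∈ eS n l ↔ d.2.2.1 ≤ d.2.2.2.2 ∧ d.2.2.2.2 + 1 < l := by
  simp only [eS, Finset.mem_filter, Finset.mem_product, Finset.mem_univ, Finset.mem_range, true_and,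
    and_iff_right_iff_imp]
  omega

theorem opDeg_zd (d : Dsc (n / l)) (hd : d.ok l) : OpDeg h hl (zd h hl d) d.deg :=
  opDeg_Zr _ _ _ _ _ hd.1 hd.2

theorem opDeg_eT (d : Dsc (n / l)) (hd : d ∈ eS n l) : OpDeg h hl (eT h hl d) 0 := by
  obtain ⟨h1, h2⟩ := (mem_eS d).1 hd
  have := (opDeg_zd (h := h) (hl := hl) d ⟨h1, by omega⟩).mul
    (opDeg_gH (h := h) (hl := hl) d.1 d.2.2.2.1 (d.2.2.2.2 + 1) d.2.1 d.2.2.1 (by omega) (by omega))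
  exact (OpDeg.smul _ this).mono (by simp only [Dsc.deg, dg]; push_cast; omega)

theorem opDeg_Eu : OpDeg h hl (Eu h hl) 0 := OpDeg.sum _ _ fun d hd => opDeg_eT d hd

theorem ss_sq (s t : Bool) : ss s t * ss s t = 1 := by cases s <;> cases t <;> simp [ss]
theorem pw_sq (s : Bool) (m : ℕ) : pw s m * pw s m = 1 := by
  cases s <;> simp [pw, ← mul_pow]

theorem eT_comm (d y : Dsc (n / l)) (hd : d ∈ eS n l) (hy : y.ok l) :
    OpDeg h hl (eT h hl d * zd h hl y - zd h hl y * eT h hl d -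
      (if d = y then zd h hl y else 0)) (y.deg - 1) := by
  obtain ⟨h1, h2⟩ := (mem_eS d).1 hd
  obtain ⟨s, p, I, q, C⟩ := d
  obtain ⟨t, r, i, u, c⟩ := y
  obtain ⟨h3, h4⟩ := hy
  simp only at h1 h2 h3 h4
  have A := am_Zr (h := h) (hl := hl) s t p q r u I C h1 h2 i c h3 h4
  have B := Zr_Zr (h := h) (hl := hl) s t p q r u i c h3 h4 I C h1 (by omega)
  have Zo := opDeg_Zr (h := h) (hl := hl) s p I q C h1 (by omega)
  have ao := opDeg_gH (h := h) (hl := hl) s q (C + 1) p I (by omega) (by omega)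
  have T1 := (Zo.mul A).mono (show _ ≤ dg i c - 1 by simp only [dg]; push_cast; omega)
  have T2 := ((B.mul ao).mono (show _ ≤ dg i c - 1 by simp only [dg]; push_cast; omega)).smul (ss s t)
  have T3 := (T1.add T2).smul (pw s C)
  have hdeg : Dsc.deg ((t, r, i, u, c) : Dsc (n / l)) = dg i c := rfl
  rw [hdeg]
  have key : (if ((s, p, I, q, C) : Dsc (n / l)) = (t, r, i, u, c) then zd h hl (t, r, i, u, c) else 0) =
      (pw s C * (if ((s, p, I, q, C) : Dsc (n / l)) = (t, r, i, u, c) then pw t c else 0)) •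
        Zr h hl s p I q C := by
    split_ifs with he
    · simp only [Prod.mk.injEq] at he
      obtain ⟨rfl, rfl, rfl, rfl, rfl⟩ := he
      rw [pw_sq, one_smul]; rfl
    · simp
  rw [key]
  convert T3 using 1
  simp only [eT, zd, sc]
  generalize (if ((s, p, I, q, C) : Dsc (n / l)) = (t, r, i, u, c) then pw t c else 0) = k
  simp only [mul_sub, sub_mul, smul_mul_assoc, mul_smul_comm, mul_assoc, mul_one, smul_sub, smul_add,
    smul_smul, zero_smul, ss_sq]
  rw [zero_mul]
  module

/-- counting function -/
def cntd {m : ℕ} (l : ℕ) (d : Dsc m) : ℕ := if d.2.2.2.2 + 1 < l then 1 else 0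

theorem Eu_comm (y : Dsc (n / l)) (hy : y.ok l) :
    OpDeg h hl (Eu h hl * zd h hl y - zd h hl y * Eu h hl - (cntd l y : ℂ) • zd h hl y)
      (y.deg - 1) := by
  have := OpDeg.sum (h := h) (hl := hl) (eS n l) _ (fun d hd => eT_comm d y hd hy)
  convert this using 1
  rw [Finset.sum_sub_distrib, Finset.sum_sub_distrib, ← Finset.sum_mul, ← Finset.mul_sum, Eu]
  congr 1
  rw [Finset.sum_ite_eq']
  have : y ∈ eS n l ↔ y.2.2.2.2 + 1 < l := by rw [mem_eS]; exact ⟨fun h => h.2, fun h => ⟨hy.1, h⟩⟩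
  simp only [this, cntd]
  split_ifs <;> simp

theorem Eu_mem : Eu h hl ∈ Ichi n l h := by
  refine sum_mem fun d hd => ?_
  obtain ⟨h1, h2⟩ := (mem_eS d).1 hd
  rw [eT, ← smul_mul_assoc]
  exact (Ichi n l h).smul_mem _ (gH_mem_Ichi h hl _ _ _ _ _ (by omega) h2)

theorem Eu_mono (L : List (Dsc (n / l))) (hL : ∀ d ∈ L, Dsc.ok l d) :
    Eu h hl * (L.map (zd h hl)).prod - (((L.map (cntd l)).sum : ℕ) : ℂ) • (L.map (zd h hl)).prod ∈
      Fil h hl ((L.map Dsc.deg).sum - 1) ∧ (L.map (zd h hl)).prod ∈ Fil h hl (L.map Dsc.deg).sum := by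
  induction L with
  | nil => simpa using ⟨Ichi_le_Fil h hl _ Eu_mem, one_mem_Fil⟩
  | cons x L ih =>
    obtain ⟨ih1, ih2⟩ := ih fun d hd => hL d (List.mem_cons_of_mem _ hd)
    have hx := hL x List.mem_cons_self
    have ox := opDeg_zd (h := h) (hl := hl) x hx
    simp only [List.map_cons, List.prod_cons, List.sum_cons]
    constructor
    · have h1 := ox _ _ ih1
      have h2 := Eu_comm (h := h) (hl := hl) x hx _ _ ih2
      have := add_mem (Fil_mono h hl (show _ ≤ x.deg + (L.map Dsc.deg).sum - 1 by omega) h1)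
        (Fil_mono h hl (show _ ≤ x.deg + (L.map Dsc.deg).sum - 1 by omega) h2)
      convert this using 1
      push_cast
      simp only [mul_sub, sub_mul, smul_mul_assoc, mul_smul_comm, mul_assoc]
      module
    · exact Fil_mono h hl (by omega) (ox _ _ ih2)
end



/-- The idealizer of the left ideal. -/
def Wal {n l : ℕ} (h : l ∣ n) : Subalgebra ℂ (UQ n) where
  carrier := {y | ∀ x ∈ Ichi n l h, x * y ∈ Ichi n l h}
  mul_mem' := by
    intro a b ha hb x hx
    rw [← mul_assoc]; exact hb _ (ha _ hx)
  add_mem' := by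
    intro a b ha hb x hx
    rw [mul_add]; exact add_mem (ha _ hx) (hb _ hx)
  algebraMap_mem' := by
    intro r x hx
    rw [← Algebra.commutes]; exact (Ichi n l h).smul_mem _ hx

section
variable {n l : ℕ} {h : l ∣ n} {hl : 0 < l}

theorem mem_Wal {y : UQ n} : y ∈ Wal h ↔ ∀ x ∈ Ichi n l h, x * y ∈ Ichi n l h := Iff.rfl

theorem mem_Wal_of {y : UQ n} (H : ∀ x ∈ mSet n l h, x * y ∈ Ichi n l h) : y ∈ Wal h := by
  intro x hx
  induction hx using Submodule.span_induction with
  | mem x hx => exact H x hx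
  | zero => rw [zero_mul]; exact zero_mem _
  | add a b _ _ ha hb => rw [add_mul]; exact add_mem ha hb
  | smul r a _ ha => rw [smul_eq_mul, mul_assoc]; exact (Ichi n l h).smul_mem r ha

theorem Wcond_iff (σ : UQ n →ₐ[ℂ] UQ n) (y : UQ n) : Wcond h σ y ↔ y ∈ Wal h := by
  have key1 : ∀ (p q : Fin (n / l)) (a b : Fin l) (k : ℂ),
      Ue (bidx h p a) (bidx h q b) * y - y * Ue (bidx h p a) (bidx h q b) =
      (Ue (bidx h p a) (bidx h q b) - algebraMap ℂ (UQ n) k) * y -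
        y • (Ue (bidx h p a) (bidx h q b) - algebraMap ℂ (UQ n) k) := by
    intro p q a b k
    rw [smul_eq_mul, sub_mul, mul_sub, Algebra.commutes]; abel
  constructor
  · intro H
    apply mem_Wal_of
    rintro x ⟨p, q, a, b, hab, hx⟩
    have hx' : x ∈ Ichi n l h := Submodule.subset_span ⟨p, q, a, b, hab, hx⟩
    rcases hx with rfl | rfl
    · have h1 := (H p q a b hab).1
      rw [key1 p q a b (if a.val = b.val + 1 ∧ p = q then 1 else 0)] at h1
      have := add_mem h1 ((Ichi n l h).smul_mem y hx')
      rwa [sub_add_cancel] at this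
    · have h1 := (H p q a b hab).2
      have := add_mem h1 ((Ichi n l h).smul_mem (σ y) hx')
      rwa [smul_eq_mul, sub_add_cancel] at this
  · intro H p q a b hab
    constructor
    · rw [key1 p q a b (if a.val = b.val + 1 ∧ p = q then 1 else 0)]
      have hx' : Ue (bidx h p a) (bidx h q b) -
            algebraMap ℂ (UQ n) (if a.val = b.val + 1 ∧ p = q then 1 else 0) ∈ Ichi n l h :=
        Submodule.subset_span ⟨p, q, a, b, hab, Or.inl rfl⟩
      exact sub_mem (H _ hx') ((Ichi n l h).smul_mem y hx')
    · have hx' : Uf (bidx h p a) (bidx h q b) ∈ Ichi n l h :=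
        Submodule.subset_span ⟨p, q, a, b, hab, Or.inr rfl⟩
      exact sub_mem (H _ hx') ((Ichi n l h).smul_mem (σ y) hx')

theorem gX_Wal (m : ℕ) (s : Bool) (r u : Fin (n / l)) :
    gX m s (bn h hl r (l - 1)) (bn h hl u 0) ∈ Wal h := by
  apply mem_Wal_of
  have key : ∀ t p q a b, b < a → a < l → gH h hl t p a q b * gX m s (bn h hl r (l - 1)) (bn h hl u 0)
      ∈ Ichi n l h := by
    intro t p q a b hab ha
    have e := comm_all n m t s (bn h hl p a) (bn h hl q b) (bn h hl r (l - 1)) (bn h hl u 0)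
    rw [kd_bn h hl q r b (l - 1) (by omega) (by omega), if_neg (by omega),
      kd_bn h hl u p 0 a hl ha, if_neg (by omega)] at e
    have : gH h hl t p a q b * gX m s (bn h hl r (l - 1)) (bn h hl u 0) =
        (ss t s • gX m s (bn h hl r (l - 1)) (bn h hl u 0)) • gH h hl t p a q b := by
      rw [gH, sub_mul, e, smul_eq_mul, mul_sub]
      cases t
      · simp [ss]
      · simp [chi]
    rw [this]
    exact (Ichi n l h).smul_mem _ (gH_mem_Ichi h hl t p a q b hab ha)
  rintro x ⟨p, q, a, b, hab, hx⟩
  rw [bn_fin h hl, bn_fin h hl] at hx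
  rcases hx with rfl | rfl
  · have := key false p q a b hab a.isLt
    simpa [gH, gG, chi, Algebra.algebraMap_eq_smul_one] using this
  · have := key true p q a b hab a.isLt
    simpa [gH, gG, chi] using this

theorem Eu_W {w : UQ n} (hw : w ∈ Wal h) : Eu h hl * w ∈ Ichi n l h := hw _ Eu_mem

theorem Fil_mul {δ e : ℤ} {v y : UQ n} (hv : v ∈ Fil h hl δ) (hy : y ∈ Fil h hl e) (hW : y ∈ Wal h) :
    v * y ∈ Fil h hl (δ + e) := by
  have : Fil h hl δ ≤ (Fil h hl (δ + e)).comap (LinearMap.mulRight ℂ y) := by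
    apply Submodule.span_le.2
    rintro x (hx | ⟨L, hL, hd, rfl⟩)
    · exact Ichi_le_Fil h hl _ (hW _ hx)
    · show (L.map (gHd h hl)).prod * y ∈ Fil h hl (δ + e)
      have hop : OpDeg h hl (L.map (gHd h hl)).prod (L.map Dsc.deg).sum := by
        clear hd
        induction L with
        | nil => simpa using opDeg_one
        | cons x L ih =>
          simp only [List.map_cons, List.prod_cons, List.sum_cons]
          exact (opDeg_p x (hL _ List.mem_cons_self)).mul
            (ih fun d hd => hL d (List.mem_cons_of_mem _ hd))
      exact Fil_mono h hl (by omega) (hop _ _ hy)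
  exact this hv

variable (h hl)
/-- span of refined monomials of bounded degree and count -/
def Kf (R : ℕ) (d : ℤ) : Submodule ℂ (UQ n) :=
  Submodule.span ℂ ({x | x ∈ Fil h hl (d - 1)} ∪ {x | ∃ L : List (Dsc (n / l)),
    (∀ d ∈ L, Dsc.ok l d) ∧ (L.map Dsc.deg).sum ≤ d ∧ (L.map (cntd l)).sum ≤ R ∧
      x = (L.map (zd h hl)).prod})

/-- span of refined monomials of bounded degree -/
def RF (d : ℤ) : Submodule ℂ (UQ n) :=
  Submodule.span ℂ ({x | x ∈ Ichi n l h} ∪ {x | ∃ L : List (Dsc (n / l)),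
    (∀ d ∈ L, Dsc.ok l d) ∧ (L.map Dsc.deg).sum ≤ d ∧ x = (L.map (zd h hl)).prod})
variable {h hl}

theorem zd_RF (x : Dsc (n / l)) (hx : x.ok l) {e : ℤ} {v : UQ n} (hv : v ∈ RF h hl e) :
    zd h hl x * v ∈ RF h hl (x.deg + e) := by
  have : RF h hl e ≤ (RF h hl (x.deg + e)).comap (LinearMap.mulLeft ℂ (zd h hl x)) := by
    apply Submodule.span_le.2
    rintro y (hy | ⟨L, hL, hd, rfl⟩)
    · exact Submodule.subset_span (Or.inl ((Ichi n l h).smul_mem _ hy))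
    · refine Submodule.subset_span (Or.inr ⟨x :: L, ?_, ?_, ?_⟩)
      · intro d hd
        rcases List.mem_cons.1 hd with rfl | hd
        · exact hx
        · exact hL _ hd
      · simp only [List.map_cons, List.sum_cons]; omega
      · simp
  exact this hv

theorem gHd_RF (x : Dsc (n / l)) (hx : x.ok l) {e : ℤ} {v : UQ n} (hv : v ∈ RF h hl e) :
    gHd h hl x * v ∈ RF h hl (x.deg + e) := by
  obtain ⟨s, p, i, q, c⟩ := x
  obtain ⟨h1, h2⟩ := hx
  simp only at h1 h2
  have e1 := Zr_rec (h := h) (hl := hl) s p i q c h1 h2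
  have e2 : gHd h hl (s, p, i, q, c) = pw s c • (Zr h hl s p i q c -
      (if 1 ≤ i then Zr h hl s p (i - 1) q (c - 1) else 0)) := by
    rw [e1, add_sub_cancel_left, smul_smul, pw_sq, one_smul]; rfl
  rw [e2, smul_mul_assoc, sub_mul]
  apply Submodule.smul_mem
  refine sub_mem (zd_RF (s, p, i, q, c) ⟨h1, h2⟩ hv) ?_
  split_ifs with hi
  · have := zd_RF (h := h) (hl := hl) (s, p, i - 1, q, c - 1) ⟨by simp only; omega, by simp only; omega⟩ hv
    have hdeg : Dsc.deg (s, p, i - 1, q, c - 1) = Dsc.deg (s, p, i, q, c) := by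
      simp only [Dsc.deg, dg]; push_cast [hi, hi.trans h1]; ring
    rwa [hdeg] at this
  · rw [zero_mul]; exact zero_mem _

theorem Fil_le_RF (d : ℤ) : Fil h hl d ≤ RF h hl d := by
  apply Submodule.span_le.2
  rintro y (hy | ⟨L, hL, hd, rfl⟩)
  · exact Submodule.subset_span (Or.inl hy)
  · have key : ∀ L : List (Dsc (n / l)), (∀ d ∈ L, Dsc.ok l d) →
        (L.map (gHd h hl)).prod ∈ RF h hl (L.map Dsc.deg).sum := by
      intro L
      induction L with
      | nil => exact fun _ => Submodule.subset_span (Or.inr ⟨[], by simp, by simp, by simp⟩)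
      | cons x L ih =>
        intro hL
        simp only [List.map_cons, List.prod_cons, List.sum_cons]
        exact gHd_RF x (hL _ List.mem_cons_self) (ih fun d hd => hL d (List.mem_cons_of_mem _ hd))
    have mono : RF h hl (L.map Dsc.deg).sum ≤ RF h hl d := by
      apply Submodule.span_mono
      rintro x (hx | ⟨L, hL, hd', rfl⟩)
      · exact Or.inl hx
      · exact Or.inr ⟨L, hL, hd'.trans hd, rfl⟩
    exact mono (key L hL)

theorem cnt_le (L : List (Dsc (n / l))) : (L.map (cntd l)).sum ≤ L.length := by
  induction L with
  | nil => simp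
  | cons x L ih =>
    simp only [List.map_cons, List.sum_cons, List.length_cons]
    have : cntd l x ≤ 1 := by unfold cntd; split_ifs <;> omega
    omega

theorem RF_le_Kf (d : ℤ) : RF h hl d ≤ Kf h hl d.toNat d := by
  apply Submodule.span_le.2
  rintro y (hy | ⟨L, hL, hd, rfl⟩)
  · exact Submodule.subset_span (Or.inl (Ichi_le_Fil h hl _ hy))
  · refine Submodule.subset_span (Or.inr ⟨L, hL, hd, ?_, rfl⟩)
    have h1 := cnt_le L
    have h2 := len_le_deg L hL
    omega

theorem Kf_step (R : ℕ) (d : ℤ) {w : UQ n} (hw : w ∈ Kf h hl (R + 1) d) :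
    Eu h hl * w - ((R + 1 : ℕ) : ℂ) • w ∈ Kf h hl R d := by
  have : Kf h hl (R + 1) d ≤ (Kf h hl R d).comap
      (LinearMap.mulLeft ℂ (Eu h hl) - ((R + 1 : ℕ) : ℂ) • LinearMap.id) := by
    apply Submodule.span_le.2
    rintro y (hy | ⟨L, hL, hd, hc, rfl⟩)
    · show Eu h hl * y - ((R + 1 : ℕ) : ℂ) • y ∈ Kf h hl R d
      refine Submodule.subset_span (Or.inl ?_)
      have := opDeg_Eu (h := h) (hl := hl) _ _ hy
      rw [add_zero] at this
      exact sub_mem this (Submodule.smul_mem _ _ hy)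
    · show Eu h hl * (L.map (zd h hl)).prod - ((R + 1 : ℕ) : ℂ) • (L.map (zd h hl)).prod ∈ Kf h hl R d
      have h1 := (Eu_mono (h := h) (hl := hl) L hL).1
      have h2 : _ ∈ Kf h hl R d :=
        Submodule.subset_span (Or.inl (Fil_mono h hl (show _ ≤ d - 1 by omega) h1))
      have h3 : (((L.map (cntd l)).sum : ℂ) - ((R + 1 : ℕ) : ℂ)) • (L.map (zd h hl)).prod
          ∈ Kf h hl R d := by
        rcases Nat.lt_or_ge R (L.map (cntd l)).sum with hlt | hge
        · have : (L.map (cntd l)).sum = R + 1 := by omega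
          rw [this, sub_self, zero_smul]; exact zero_mem _
        · exact Submodule.smul_mem _ _ (Submodule.subset_span (Or.inr ⟨L, hL, hd, hge, rfl⟩))
      have := add_mem h2 h3
      convert this using 1
      module
  exact this hw

theorem W_Kf (d : ℤ) {w : UQ n} (hW : w ∈ Wal h) (R : ℕ) (hw : w ∈ Kf h hl R d) :
    w ∈ Kf h hl 0 d := by
  induction R with
  | zero => exact hw
  | succ R ih =>
    apply ih
    have h1 := Kf_step R d hw
    have h2 : Eu h hl * w ∈ Kf h hl R d :=
      Submodule.subset_span (Or.inl (Ichi_le_Fil h hl _ (Eu_W hW)))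
    have h3 := sub_mem h2 h1
    rw [sub_sub_cancel] at h3
    have h4 := Submodule.smul_mem _ (((R + 1 : ℕ) : ℂ)⁻¹) h3
    rwa [smul_smul, inv_mul_cancel₀ (by exact_mod_cast Nat.succ_ne_zero R), one_smul] at h4

theorem cnt0_approx (S : Subalgebra ℂ (UQ n))
    (hS : ∀ r s p q, gX (l + r) s (bn h hl p (l - 1)) (bn h hl q 0) ∈ S) (hSW : S ≤ Wal h)
    (L : List (Dsc (n / l))) : (∀ d ∈ L, Dsc.ok l d) → (L.map (cntd l)).sum = 0 →
    ∃ y ∈ S, (L.map (zd h hl)).prod - y ∈ Fil h hl ((L.map Dsc.deg).sum - 1) := by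
  induction L with
  | nil =>
    intro _ _
    exact ⟨1, one_mem _, by simp⟩
  | cons x L ih =>
    intro hL hc
    simp only [List.map_cons, List.prod_cons, List.sum_cons] at hc ⊢
    have hL' : ∀ d ∈ L, Dsc.ok l d := fun d hd => hL d (List.mem_cons_of_mem _ hd)
    have hx := hL x List.mem_cons_self
    obtain ⟨y, hy, hyL⟩ := ih hL' (by omega)
    obtain ⟨s, p, i, q, c⟩ := x
    have ox := opDeg_zd (h := h) (hl := hl) _ hx
    obtain ⟨h1, h2⟩ := hx
    simp only at h1 h2
    have hcl : c = l - 1 := by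
      have : cntd l (s, p, i, q, c) = 0 := by omega
      unfold cntd at this
      simp only [ite_eq_right_iff] at this
      by_contra hne
      have := this (by omega)
      omega
    subst hcl
    obtain ⟨r, hr, rfl⟩ : ∃ r, r < l ∧ i = l - 1 - r := ⟨l - 1 - i, by omega, by omega⟩
    have hX := X_lead (h := h) (hl := hl) r hr s p q
    have hz : zd h hl (s, p, l - 1 - r, q, l - 1) = mn h hl l s p (l - 1 - r) q := by
      simp only [zd, Zr]; rw [show l - 1 + 1 = l by omega]
    have hdeg : Dsc.deg (s, p, l - 1 - r, q, l - 1) = 2 * r + 1 := by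
      simp only [Dsc.deg, dg]
      push_cast [show r ≤ l - 1 by omega, show 1 ≤ l from hl]; ring
    refine ⟨_, S.mul_mem (hS r s p q) hy, ?_⟩
    have hyF : y ∈ Fil h hl (L.map Dsc.deg).sum := by
      have h5 := sub_mem (Eu_mono (h := h) (hl := hl) L hL').2
        (Fil_mono h hl (show _ ≤ (L.map Dsc.deg).sum by omega) hyL)
      rwa [sub_sub_cancel] at h5
    have h6 := Fil_mul hX hyF (hSW hy)
    have h7 := ox _ _ hyL
    rw [hdeg] at h7 ⊢
    have h8 := sub_mem (Fil_mono h hl (show _ ≤ 2 * (r : ℤ) + 1 + (L.map Dsc.deg).sum - 1 by omega) h7)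
      (Fil_mono h hl (show _ ≤ 2 * (r : ℤ) + 1 + (L.map Dsc.deg).sum - 1 by omega) h6)
    convert h8 using 1
    rw [hz, mul_sub (mn h hl l s p (l - 1 - r) q), sub_mul]
    abel

theorem W_surj_aux (S : Subalgebra ℂ (UQ n))
    (hS : ∀ r s p q, gX (l + r) s (bn h hl p (l - 1)) (bn h hl q 0) ∈ S) (hSW : S ≤ Wal h)
    (k : ℕ) : ∀ w ∈ Wal h, w ∈ Fil h hl ((k : ℤ) - 1) → ∃ y ∈ S, w - y ∈ Ichi n l h := by
  induction k with
  | zero =>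
    intro w hw hF
    exact ⟨0, zero_mem _, by rw [sub_zero]; exact Fil_neg (by simp) hF⟩
  | succ k ih =>
    intro w hw hF
    have h1 : w ∈ Fil h hl (k : ℤ) := Fil_mono h hl (by push_cast; omega) hF
    have h2 := W_Kf _ hw _ (RF_le_Kf _ (Fil_le_RF _ h1))
    have h3 : ∃ y ∈ S, w - y ∈ Fil h hl ((k : ℤ) - 1) := by
      clear h1 hF hw
      induction h2 using Submodule.span_induction with
      | mem x hx =>
        rcases hx with hx | ⟨L, hL, hd, hc, rfl⟩
        · exact ⟨0, zero_mem _, by rw [sub_zero]; exact hx⟩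
        · obtain ⟨y, hy, hyL⟩ := cnt0_approx S hS hSW L hL (by omega)
          exact ⟨y, hy, Fil_mono h hl (by omega) hyL⟩
      | zero => exact ⟨0, zero_mem _, by simp⟩
      | add a b _ _ ha hb =>
        obtain ⟨y, hy, hy'⟩ := ha
        obtain ⟨z, hz, hz'⟩ := hb
        refine ⟨y + z, add_mem hy hz, ?_⟩
        rw [add_sub_add_comm]; exact add_mem hy' hz'
      | smul c a _ ha =>
        obtain ⟨y, hy, hy'⟩ := ha
        refine ⟨c • y, S.smul_mem hy c, ?_⟩
        rw [← smul_sub]; exact Submodule.smul_mem _ _ hy'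
    obtain ⟨y, hy, hy'⟩ := h3
    obtain ⟨z, hz, hz'⟩ := ih (w - y) (sub_mem hw (hSW hy)) hy'
    exact ⟨y + z, add_mem hy hz, by rwa [← sub_sub]⟩

variable (hl) in
theorem W_surj (S : Subalgebra ℂ (UQ n))
    (hS : ∀ r s p q, gX (l + r) s (bn h hl p (l - 1)) (bn h hl q 0) ∈ S) (hSW : S ≤ Wal h)
    (w : UQ n) (hw : w ∈ Wal h) : ∃ y ∈ S, w - y ∈ Ichi n l h := by
  obtain ⟨e, he⟩ := exists_Fil h hl w
  exact W_surj_aux S hS hSW (e + 1) w hw (Fil_mono h hl (by push_cast; omega) he)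
end



/-- The images of the Yangian generators in `U(Q(n))`. -/
def VV {n l : ℕ} (h : l ∣ n) (hl : 0 < l) (r : ℕ) (i j : QIdx (n / l)) : UQ n :=
  ((if j.1 then (-1 : ℂ) ^ r else 1) * (-1 : ℂ) ^ r) •
    gX (l - 1 + r) (xor i.1 j.1) (bn h hl j.2 (l - 1)) (bn h hl i.2 0)

section
variable {n l : ℕ} {h : l ∣ n} {hl : 0 < l}

theorem VV_Wal (r : ℕ) (i j : QIdx (n / l)) : VV h hl r i j ∈ Wal h :=
  Subalgebra.smul_mem _ (gX_Wal _ _ _ _) _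

theorem VV_zero (i j : QIdx (n / l)) : algebraMap ℂ (UQ n) (kdq i j) - VV h hl 0 i j ∈ Ichi n l h := by
  have := X_unit (h := h) (hl := hl) (xor i.1 j.1) j.2 i.2
  have e : algebraMap ℂ (UQ n) (kdq i j) = (if xor i.1 j.1 = false ∧ j.2 = i.2 then 1 else 0) := by
    obtain ⟨bi, i⟩ := i
    obtain ⟨bj, j⟩ := j
    have : j = i ↔ i = j := eq_comm
    simp only [kdq, Prod.mk.injEq, this]
    cases bi <;> cases bj <;> by_cases hh : i = j <;> simp [hh]
  have e2 : VV h hl 0 i j = gX (l - 1) (xor i.1 j.1) (bn h hl j.2 (l - 1)) (bn h hl i.2 0) := by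
    simp [VV]
  rw [e, e2]
  rw [← neg_sub]
  exact neg_mem this

set_option maxHeartbeats 4000000 in
theorem VV_quad (m r : ℕ) (i j k u : QIdx (n / l)) :
    ((-1 : ℂ) ^ (qpar i * qpar k + qpar i * qpar u + qpar k * qpar u)) •
        ((VV h hl (m + 2) i j * VV h hl r k u -
    ((-1 : ℂ) ^ ((qpar i + qpar j) * (qpar k + qpar u))) • (VV h hl r k u * VV h hl (m + 2) i j))
      - (VV h hl m i j * VV h hl (r + 2) k u -
    ((-1 : ℂ) ^ ((qpar i + qpar j) * (qpar k + qpar u))) • (VV h hl (r + 2) k u * VV h hl m i j))) =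
      (VV h hl (m + 1) k j * VV h hl r i u + VV h hl m k j * VV h hl (r + 1) i u -
        VV h hl r k j * VV h hl (m + 1) i u - VV h hl (r + 1) k j * VV h hl m i u +
        ((-1 : ℂ) ^ (qpar k + qpar u)) •
          (-(VV h hl (m + 1) (qneg k) j * VV h hl r (qneg i) u) +
            VV h hl m (qneg k) j * VV h hl (r + 1) (qneg i) u +
            VV h hl r k (qneg j) * VV h hl (m + 1) i (qneg u) -
            VV h hl (r + 1) k (qneg j) * VV h hl m i (qneg u))) := by
  obtain ⟨bi, i⟩ := i
  obtain ⟨bj, j⟩ := j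
  obtain ⟨bk, k⟩ := k
  obtain ⟨bu, u⟩ := u
  have st := star (l - 1 + m) (l - 1 + r) (xor bk bu) (bn h hl i 0) (bn h hl u (l - 1)) (bn h hl k 0)
    (xor bi bj) (bn h hl j (l - 1))
  have pm : (-1 : ℂ) ^ (l - 1 + r + (l - 1 + m) + 1) = -((-1) ^ m * (-1) ^ r) := by
    rw [show l - 1 + r + (l - 1 + m) + 1 = 2 * (l - 1) + m + r + 1 by ring, pow_succ, pow_add,
      pow_add, pow_mul]
    simp
  have a1 : ∀ x, l - 1 + (x + 1) = l - 1 + x + 1 := fun _ => rfl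
  have a2 : ∀ x, l - 1 + (x + 2) = l - 1 + x + 2 := fun _ => rfl
  have p1 : ∀ x, (-1 : ℂ) ^ (x + 1) = - (-1) ^ x := fun x => by ring
  have p2 : ∀ x, (-1 : ℂ) ^ (x + 2) = (-1) ^ x := fun x => by ring
  simp only [gBr, gR, pm] at st
  simp only [VV, qneg, a1, a2, p1, p2, smul_mul_assoc, mul_smul_comm, smul_smul]
  generalize l - 1 + m = M at st ⊢
  generalize l - 1 + r = R at st ⊢
  generalize bn h hl i 0 = x1 at st ⊢
  generalize bn h hl k 0 = x2 at st ⊢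
  generalize bn h hl j (l - 1) = x3 at st ⊢
  generalize bn h hl u (l - 1) = x4 at st ⊢
  rcases neg_one_pow_eq_or ℂ m with hm | hm <;> rcases neg_one_pow_eq_or ℂ r with hr | hr <;>
    simp only [hm, hr] at st ⊢ <;> clear hm hr pm p1 p2 a1 a2 <;>
    cases bi <;> cases bj <;> cases bk <;> cases bu <;>
    simp only [ss, qpar, Bool.xor_false, Bool.xor_true, Bool.not_false, Bool.not_true, Bool.and_true,
      Bool.and_false, cond_true, cond_false, if_true, Bool.false_eq_true, if_false] at st ⊢ <;>
    norm_num only [one_smul, neg_smul] at st ⊢ <;>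
    first
      | linear_combination (norm := module) (1 : ℂ) • st
      | linear_combination (norm := module) (-1 : ℂ) • st
end



/-- value on free generators -/
def VG {n l : ℕ} (h : l ∣ n) (hl : 0 < l) : YGen (n / l) → UQ n
  | YGen.T m i j => VV h hl (m + 1) i j

/-- lift to the free algebra -/
def Psi {n l : ℕ} (h : l ∣ n) (hl : 0 < l) : FreeAlgebra ℂ (YGen (n / l)) →ₐ[ℂ] UQ n :=
  FreeAlgebra.lift ℂ (VG h hl)

/-- right multiplication by an element of the idealizer -/
def Rm {n l : ℕ} (h : l ∣ n) (y : UQ n) (hy : y ∈ Wal h) : Module.End ℂ (Wq n l h) :=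
  Submodule.mapQ _ _ (LinearMap.mulRight ℂ y) (fun x hx => hy x hx)

section
variable {n l : ℕ} {h : l ∣ n} {hl : 0 < l}

theorem VG_Wal (g : YGen (n / l)) : VG h hl g ∈ Wal h := by
  cases g; exact VV_Wal _ _ _

theorem Rm_pi (y : UQ n) (hy : y ∈ Wal h) (z : UQ n) : Rm h y hy (piq n l h z) = piq n l h (z * y) :=
  rfl

theorem piq_eq {x y : UQ n} : piq n l h x = piq n l h y ↔ x - y ∈ Ichi n l h :=
  Submodule.Quotient.eq _

variable (h hl) in
/-- right action of the free algebra -/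
def Th0 : FreeAlgebra ℂ (YGen (n / l)) →ₐ[ℂ] (Module.End ℂ (Wq n l h))ᵐᵒᵖ :=
  FreeAlgebra.lift ℂ (fun g => MulOpposite.op (Rm h (VG h hl g) (VG_Wal g)))

theorem Psi_Wal (x : FreeAlgebra ℂ (YGen (n / l))) : Psi h hl x ∈ Wal h := by
  induction x using FreeAlgebra.induction with
  | grade0 r => rw [AlgHom.commutes]; exact Subalgebra.algebraMap_mem _ _
  | grade1 x => rw [Psi, FreeAlgebra.lift_ι_apply]; exact VG_Wal x
  | mul a b ha hb => rw [map_mul]; exact mul_mem ha hb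
  | add a b ha hb => rw [map_add]; exact add_mem ha hb

theorem Th0_pi (x : FreeAlgebra ℂ (YGen (n / l))) : ∀ z : UQ n,
    (Th0 h hl x).unop (piq n l h z) = piq n l h (z * Psi h hl x) := by
  induction x using FreeAlgebra.induction with
  | grade0 r =>
    intro z
    rw [AlgHom.commutes, AlgHom.commutes, ← Algebra.commutes, ← Algebra.smul_def, map_smul]
    rfl
  | grade1 x =>
    intro z
    rw [Psi, Th0, FreeAlgebra.lift_ι_apply, FreeAlgebra.lift_ι_apply]
    rfl
  | mul a b ha hb =>
    intro z
    rw [map_mul (Th0 h hl), map_mul (Psi h hl), MulOpposite.unop_mul, Module.End.mul_apply, ha, hb, mul_assoc]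
  | add a b ha hb =>
    intro z
    rw [map_add (Th0 h hl), map_add (Psi h hl), MulOpposite.unop_add, LinearMap.add_apply, ha, hb, mul_add, map_add]

theorem Psi_Tf (m : ℕ) (i j : QIdx (n / l)) : Psi h hl (Tf m i j) - VV h hl m i j ∈ Ichi n l h := by
  cases m with
  | zero => rw [Tf, AlgHom.commutes]; exact VV_zero i j
  | succ m => rw [Tf, Psi, FreeAlgebra.lift_ι_apply]; simp [VG]

/-- product congruence -/
theorem mul_congr {a a' b b' : UQ n} (ha : a - a' ∈ Ichi n l h) (hb : b - b' ∈ Ichi n l h)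
    (hb' : b' ∈ Wal h) : a * b - a' * b' ∈ Ichi n l h := by
  have : a * b - a' * b' = a • (b - b') + (a - a') * b' := by
    rw [smul_eq_mul, mul_sub, sub_mul]; abel
  rw [this]
  exact add_mem ((Ichi n l h).smul_mem _ hb) (hb' _ ha)

theorem pi_TT (m r : ℕ) (i j k u : QIdx (n / l)) :
    piq n l h (Psi h hl (Tf m i j) * Psi h hl (Tf r k u)) =
      piq n l h (VV h hl m i j * VV h hl r k u) :=
  piq_eq.2 (mul_congr (Psi_Tf _ _ _) (Psi_Tf _ _ _) (VV_Wal _ _ _))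

theorem Psi_rel {x y : FreeAlgebra ℂ (YGen (n / l))} (hxy : YRel (n / l) x y) :
    piq n l h (Psi h hl x) = piq n l h (Psi h hl y) := by
  cases hxy with
  | quad m r i j k u =>
    have e := congrArg (piq n l h) (VV_quad (h := h) (hl := hl) m r i j k u)
    simp only [ybr, map_add, map_sub, map_smul, map_neg, map_mul, pi_TT] at e ⊢
    exact e
  | par m i j =>
    simp only [map_smul]
    rw [← map_smul]
    congr 1
    simp only [Tf, Psi, FreeAlgebra.lift_ι_apply, VG, VV, qneg]
    rw [smul_smul]
    have : ((-1 : ℂ) ^ (m + 1)) * (-1) ^ (m + 1) = 1 := by rw [← mul_pow]; simp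
    obtain ⟨bi, i⟩ := i
    obtain ⟨bj, j⟩ := j
    cases bi <;> cases bj <;> simp [this]

variable (h hl) in
/-- right action of the Yangian -/
def Th : YQ (n / l) →ₐ[ℂ] (Module.End ℂ (Wq n l h))ᵐᵒᵖ :=
  RingQuot.liftAlgHom ℂ ⟨Th0 h hl, by
    intro x y hxy
    apply MulOpposite.unop_injective
    apply LinearMap.ext
    intro w
    obtain ⟨z, rfl⟩ := Submodule.mkQ_surjective _ w
    have := piq_eq.1 (Psi_rel (h := h) (hl := hl) hxy)
    refine (Th0_pi x z).trans (Eq.trans ?_ (Th0_pi y z).symm)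
    apply piq_eq.2
    rw [← mul_sub]
    exact (Ichi n l h).smul_mem z this⟩

variable (h hl) in
/-- the map of the theorem -/
def phi : YQ (n / l) →ₗ[ℂ] Wq n l h where
  toFun a := (Th h hl a).unop (piq n l h 1)
  map_add' a b := by rw [map_add]; rfl
  map_smul' c a := by rw [map_smul]; rfl

theorem phi_mk (x : FreeAlgebra ℂ (YGen (n / l))) :
    phi h hl (RingQuot.mkAlgHom ℂ (YRel (n / l)) x) = piq n l h (Psi h hl x) := by
  show (Th h hl _).unop (piq n l h 1) = _
  rw [Th, RingQuot.liftAlgHom_mkAlgHom_apply, Th0_pi, one_mul]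

theorem phi_TY (r : ℕ) (i j : QIdx (n / l)) :
    phi h hl (TY (r + 1) i j) = piq n l h (VV h hl (r + 1) i j) := by
  rw [TY, phi_mk]
  exact piq_eq.2 (Psi_Tf _ _ _)
end

/-- Let `l ∣ n`.  The assignments
`φ(T^{(r)}_{q,p}) = (-1)^r π(e^{(l+r-1)}_{lp, l(q-1)+1})` and
`φ(T^{(r)}_{-q,p}) = (-1)^r π(f^{(l+r-1)}_{lp, l(q-1)+1})` (`1 ≤ p,q ≤ n/l`, `r ≥ 1`)
extend to a surjective algebra homomorphism `φ : Y(Q(n/l)) → W_χ`; multiplicativity is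
expressed via representatives, since the product of `W_χ` is `π(y₁)·π(y₂) = π(y₁y₂)`. -/
theorem statement12 (n l : ℕ) (hn : 0 < n) (hl : 0 < l) (h : l ∣ n)
    (σ : UQ n →ₐ[ℂ] UQ n)
    (hσe : ∀ i j : Fin n, σ (Ue i j) = Ue i j)
    (hσf : ∀ i j : Fin n, σ (Uf i j) = -Uf i j) :
    ∃ φ : YQ (n / l) →ₗ[ℂ] Wq n l h,
      (∀ (r : ℕ) (p q : Fin (n / l)),
        φ (TY (r + 1) (false, q) (false, p)) =
          ((-1 : ℂ) ^ (r + 1)) •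
            piq n l h (eU (l + r) (bidx h p ⟨l - 1, by omega⟩) (bidx h q ⟨0, hl⟩)) ∧
        φ (TY (r + 1) (true, q) (false, p)) =
          ((-1 : ℂ) ^ (r + 1)) •
            piq n l h (fU (l + r) (bidx h p ⟨l - 1, by omega⟩) (bidx h q ⟨0, hl⟩))) ∧
      φ 1 = piq n l h 1 ∧
      (∀ a : YQ (n / l), φ a ∈ WchiSet n l h σ) ∧
      (∀ (a b : YQ (n / l)) (ya yb : UQ n), Wcond h σ ya → Wcond h σ yb →
        piq n l h ya = φ a → piq n l h yb = φ b → φ (a * b) = piq n l h (ya * yb)) ∧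
      (∀ w ∈ WchiSet n l h σ, ∃ a : YQ (n / l), φ a = w) := by
  have hidx : l - 1 + 1 = l := by omega
  have hidx' : ∀ r, l - 1 + (r + 1) = l + r := by intro r; omega
  refine ⟨phi h hl, ?_, ?_, ?_, ?_, ?_⟩
  · intro r p q
    rw [bn_fin h hl, bn_fin h hl]
    constructor
    · rw [phi_TY, ← map_smul]
      simp [VV, gX, hidx']
    · rw [phi_TY, ← map_smul]
      simp [VV, gX, hidx']
  · rw [← map_one (RingQuot.mkAlgHom ℂ (YRel (n / l))), phi_mk, map_one]
  · intro a
    obtain ⟨x, rfl⟩ := RingQuot.mkAlgHom_surjective ℂ (YRel (n / l)) a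
    exact ⟨Psi h hl x, (Wcond_iff σ _).2 (Psi_Wal x), (phi_mk x).symm⟩
  · intro a b ya yb hya hyb ha hb
    obtain ⟨x, rfl⟩ := RingQuot.mkAlgHom_surjective ℂ (YRel (n / l)) a
    obtain ⟨y, rfl⟩ := RingQuot.mkAlgHom_surjective ℂ (YRel (n / l)) b
    rw [phi_mk] at ha hb
    rw [← map_mul, phi_mk, map_mul]
    symm
    exact piq_eq.2 (mul_congr (piq_eq.1 ha) (piq_eq.1 hb) (Psi_Wal y))
  · rintro w ⟨y, hy, rfl⟩
    have hS : ∀ r s p q, gX (l + r) s (bn h hl p (l - 1)) (bn h hl q 0) ∈ (Psi h hl).range := by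
      intro r s p q
      have : gX (l + r) s (bn h hl p (l - 1)) (bn h hl q 0) =
          Psi h hl ((-1 : ℂ) ^ (r + 1) • FreeAlgebra.ι ℂ (YGen.T r (s, q) (false, p))) := by
        rw [map_smul, Psi, FreeAlgebra.lift_ι_apply]
        have : ((-1 : ℂ) ^ (r + 1)) * (-1) ^ (r + 1) = 1 := by rw [← mul_pow]; simp
        simp [VG, VV, hidx', smul_smul, this]
      rw [this]
      exact ⟨_, rfl⟩
    have hSW : (Psi h hl).range ≤ Wal h := by
      rintro _ ⟨x, rfl⟩
      exact Psi_Wal x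
    obtain ⟨z, ⟨x, rfl⟩, hz⟩ := W_surj hl (Psi h hl).range hS hSW y ((Wcond_iff σ y).1 hy)
    refine ⟨RingQuot.mkAlgHom ℂ (YRel (n / l)) x, ?_⟩
    rw [phi_mk]
    exact (piq_eq.2 hz).symm
end
end
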